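/- arXiv:math/0703473 — 8 statements merged into one kernel-verified Lean document; each statement's English description precedes it below -/
import Mathlib

section
/- Let p be a rational prime with p ≡ 1 (mod 4), let π ∈ ℤ[i] be a prime element dividing (p : ℤ[i]), and let k ≥ 1. Then the canonical ring homomorphism ℤ → ℤ[i]/(π^k) is surjective with kernel p^kℤ, inducing a ring isomorphism ZMod (p^k) ≃ ℤ[i]/(π^k); in particular the additive group of ℤ[i]/(π^k) is cyclic of order p^k, generated by the class of 1. -/
local notation "ℤ[i]" => GaussianInt

lemma aux_norm (p : ℕ) (hp : p.Prime) (hp4 : p % 4 = 1)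
    (π : GaussianInt) (hπ : Prime π) (hdvd : π ∣ (p : GaussianInt)) : π.norm = p := by
  have : Fact p.Prime := ⟨hp⟩
  obtain ⟨w, hw⟩ := hdvd
  have h1 : π.norm.natAbs * w.norm.natAbs = p ^ 2 := by
    have := congrArg (fun x => (Zsqrtd.norm x).natAbs) hw
    simp only [Zsqrtd.norm_mul, Zsqrtd.norm_natCast, Int.natAbs_mul, Int.natAbs_natCast] at this
    rw [← this]; ring
  have h2 : π.norm.natAbs ∣ p ^ 2 := ⟨_, h1.symm⟩
  have h3 : π.norm.natAbs = p := by
    obtain ⟨j, hj, hj'⟩ := (Nat.dvd_prime_pow hp).1 h2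
    interval_cases j
    · exact absurd (Zsqrtd.norm_eq_one_iff.1 (by simpa using hj')) hπ.not_isUnit
    · simpa using hj'
    · exfalso
      have hpos : 0 < p ^ 2 := by have := hp.pos; positivity
      have h4 : w.norm.natAbs = 1 := by
        rw [hj'] at h1
        exact Nat.eq_of_mul_eq_mul_left hpos (by simpa using h1)
      have hu := Zsqrtd.norm_eq_one_iff.1 h4
      have hpp : Prime (p : GaussianInt) := by
        rw [hw]
        exact (associated_mul_unit_right π w hu).prime hπ
      have := GaussianInt.mod_four_eq_three_of_nat_prime_of_prime p hpp
      omega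
  rw [← GaussianInt.abs_natCast_norm, h3]

lemma aux_im (p k : ℕ) (hp : p.Prime) (hp4 : p % 4 = 1) (hk : 1 ≤ k)
    (π : GaussianInt) (hπ : Prime π) (hn : π.norm = p) (hnk : (π ^ k).norm = (p : ℤ) ^ k) :
    ¬ (p : ℤ) ∣ (π ^ k).im := by
  intro hd
  have hpZ : Prime (p : ℤ) := Nat.prime_iff_prime_int.1 hp
  have hc : (p : ℤ) ∣ (π ^ k).re := by
    have h : (π ^ k).re * (π ^ k).re = (p : ℤ) ^ k - (π ^ k).im * (π ^ k).im := by
      rw [← hnk, Zsqrtd.norm_def]; ring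
    have : (p : ℤ) ∣ (π ^ k).re * (π ^ k).re := by
      rw [h]
      exact dvd_sub (dvd_pow_self _ (by omega)) (hd.mul_left _)
    exact (hpZ.dvd_or_dvd this).elim id id
  have hpd : ((p : ℤ) : GaussianInt) ∣ π ^ k := (Zsqrtd.intCast_dvd _ _).2 ⟨hc, hd⟩
  have hmul : ((p : ℤ) : GaussianInt) = π * star π := by
    rw [← hn, Zsqrtd.norm_eq_mul_conj]
  have hsp : Prime (star π) := by
    exact (MulEquiv.prime_iff (starRingAut : GaussianInt ≃+* GaussianInt).toMulEquiv).2 hπ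
  have h1 : star π ∣ π := hsp.dvd_of_dvd_pow ((Dvd.intro_left _ hmul.symm).trans hpd)
  have h2 : star π ∣ ((2 * π.re : ℤ) : GaussianInt) := by
    have : ((2 * π.re : ℤ) : GaussianInt) = π + star π := by
      ext <;> simp; ring
    rw [this]; exact dvd_add h1 dvd_rfl
  obtain ⟨w, hw⟩ := h2
  have h3 := congrArg Zsqrtd.norm hw
  rw [Zsqrtd.norm_mul, Zsqrtd.norm_conj, Zsqrtd.norm_intCast, hn] at h3
  have h4 : (p : ℤ) ∣ 2 * π.re := by
    have : (p : ℤ) ∣ (2 * π.re) * (2 * π.re) := ⟨_, h3⟩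
    exact (hpZ.dvd_or_dvd this).elim id id
  have h5 : (p : ℤ) ∣ π.re := by
    rcases hpZ.dvd_or_dvd h4 with h | h
    · exfalso
      have := Nat.le_of_dvd (by norm_num) (Int.natCast_dvd_natCast.1 (by exact_mod_cast h) : p ∣ 2)
      have := hp.two_le
      omega
    · exact h
  have hn' : π.re * π.re + π.im * π.im = p := by
    rw [← hn, Zsqrtd.norm_def]; ring
  have h6 : (p : ℤ) ∣ π.im := by
    have : (p : ℤ) ∣ π.im * π.im := by
      have e : π.im * π.im = p - π.re * π.re := by linarith
      rw [e]; exact dvd_sub dvd_rfl (h5.mul_left _)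
    exact (hpZ.dvd_or_dvd this).elim id id
  obtain ⟨x, hx⟩ := h5
  obtain ⟨y, hy⟩ := h6
  rw [hx, hy] at hn'
  apply hpZ.not_isUnit
  refine IsUnit.of_mul_eq_one (x * x + y * y) ?_
  have := hpZ.ne_zero
  apply mul_left_cancel₀ this
  linarith

/-- for a rational prime `p ≡ 1 (mod 4)`, a prime `π ∈ ℤ[i]` dividing `p`,
and `k ≥ 1`, the canonical ring homomorphism `ℤ → ℤ[i]/(π^k)` is surjective with kernel
`p^k ℤ`, inducing a ring isomorphism `ZMod (p^k) ≃ ℤ[i]/(π^k)`; in particular the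
additive group of `ℤ[i]/(π^k)` is cyclic of order `p^k`, generated by the class of `1`. -/
theorem gaussian_quotient_split_prime_power (p k : ℕ) (hp : p.Prime) (hp4 : p % 4 = 1)
    (π : ℤ[i]) (hπ : Prime π) (hdvd : π ∣ (p : ℤ[i])) (hk : 1 ≤ k) :
    Function.Surjective
      (Int.castRingHom (ℤ[i] ⧸ Ideal.span {π ^ k})) ∧
    RingHom.ker (Int.castRingHom (ℤ[i] ⧸ Ideal.span {π ^ k})) =
      Ideal.span {((p : ℤ) ^ k)} ∧
    (∃ e : ZMod (p ^ k) ≃+* (ℤ[i] ⧸ Ideal.span {π ^ k}),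
      ∀ a : ℤ, e (a : ZMod (p ^ k)) = ((a : ℤ[i] ⧸ Ideal.span {π ^ k}))) ∧
    AddSubgroup.zmultiples (1 : ℤ[i] ⧸ Ideal.span {π ^ k}) = ⊤ ∧
    Nat.card (ℤ[i] ⧸ Ideal.span {π ^ k}) = p ^ k := by
  have hn := aux_norm p hp hp4 π hπ hdvd
  have hnk : (π ^ k).norm = (p : ℤ) ^ k := by
    have := map_pow (Zsqrtd.normMonoidHom (d := -1)) π k
    rw [← hn]; exact this
  have him := aux_im p k hp hp4 hk π hπ hn hnk
  generalize π ^ k = z at hnk him ⊢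
  have hpZ : Prime (p : ℤ) := Nat.prime_iff_prime_int.1 hp
  have hcop : IsCoprime z.im ((p : ℤ) ^ k) :=
    ((hpZ.coprime_iff_not_dvd.2 him).symm).pow_right
  have hzp : (((p : ℤ) ^ k : ℤ) : GaussianInt) = z * star z := by
    rw [← hnk, Zsqrtd.norm_eq_mul_conj]
  have hcast : ∀ a : ℤ, (a : ℤ[i] ⧸ Ideal.span {z}) =
      Ideal.Quotient.mk (Ideal.span {z}) (a : ℤ[i]) := fun a => (map_intCast _ a).symm
  have hzero : ∀ a : ℤ, (a : ℤ[i] ⧸ Ideal.span {z}) = 0 ↔ (p : ℤ) ^ k ∣ a := by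
    intro a
    rw [hcast, Ideal.Quotient.eq_zero_iff_mem, Ideal.mem_span_singleton]
    constructor
    · rintro ⟨w, hw⟩
      have h : (((p : ℤ) ^ k : ℤ) : GaussianInt) ∣ (a : GaussianInt) * star z := by
        refine ⟨w, ?_⟩
        rw [hzp, hw]; ring
      have h2 := ((Zsqrtd.intCast_dvd _ _).1 h).2
      have h3 : (p : ℤ) ^ k ∣ a * z.im := by
        simpa using h2
      exact hcop.symm.dvd_of_dvd_mul_right h3
    · rintro ⟨b, rfl⟩
      rw [Int.cast_mul, hzp, mul_assoc]
      exact dvd_mul_right _ _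
  have hsurj : Function.Surjective (Int.castRingHom (ℤ[i] ⧸ Ideal.span {z})) := by
    intro q
    obtain ⟨x, rfl⟩ := Ideal.Quotient.mk_surjective q
    obtain ⟨u, v, huv⟩ := hcop
    refine ⟨x.re - x.im * (u * z.re), ?_⟩
    rw [eq_intCast, hcast, Ideal.Quotient.eq, Ideal.mem_span_singleton]
    refine ⟨-(x.im : GaussianInt) * (u + v * star z * ⟨0, 1⟩), ?_⟩
    have e : z * (-(x.im : GaussianInt) * (u + v * star z * ⟨0, 1⟩)) =
        -(x.im : GaussianInt) * (u * z + v * (((p : ℤ) ^ k : ℤ) : GaussianInt) * ⟨0, 1⟩) := by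
      rw [hzp]; ring
    rw [e]
    generalize (p : ℤ) ^ k = P at *
    ext
    · simp
    · simp
      linear_combination (-x.im) * huv
  have hker : RingHom.ker (Int.castRingHom (ℤ[i] ⧸ Ideal.span {z})) =
      Ideal.span {((p : ℤ) ^ k)} := by
    ext a
    rw [RingHom.mem_ker, eq_intCast, hzero, Ideal.mem_span_singleton]
  have : CharP (ℤ[i] ⧸ Ideal.span {z}) (p ^ k) := ⟨fun a => by
    have := hzero a
    rw [Int.cast_natCast] at this
    rw [this]
    exact_mod_cast Int.natCast_dvd_natCast⟩
  have hbij : Function.Bijective (ZMod.castHom (dvd_refl (p ^ k)) (ℤ[i] ⧸ Ideal.span {z})) := by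
    refine ⟨ZMod.castHom_injective _, fun q => ?_⟩
    obtain ⟨a, rfl⟩ := hsurj q
    exact ⟨(a : ZMod (p ^ k)), by rw [map_intCast, eq_intCast]⟩
  refine ⟨hsurj, hker, ⟨RingEquiv.ofBijective _ hbij, fun a => map_intCast _ a⟩, ?_, ?_⟩
  · rw [AddSubgroup.eq_top_iff']
    intro q
    obtain ⟨a, rfl⟩ := hsurj q
    exact AddSubgroup.mem_zmultiples_iff.2 ⟨a, by simp⟩
  · rw [← Nat.card_congr (Equiv.ofBijective _ hbij), Nat.card_zmod]
end

section
/- Let p be a rational prime with p ≡ 1 (mod 6), let π ∈ ℤ[ζ] be a prime element dividing (p : ℤ[ζ]), and let k ≥ 1. Then the canonical ring homomorphism ℤ → ℤ[ζ]/(π^k) is surjective with kernel p^kℤ, inducing a ring isomorphism ZMod (p^k) ≃ ℤ[ζ]/(π^k); in particular the additive group of ℤ[ζ]/(π^k) is cyclic of order p^k, generated by the class of 1. -/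
open Polynomial

/-- The ring of Eisenstein integers `ℤ[ζ]`, with `ζ` a primitive cube root of unity. -/
abbrev Eisenstein : Type := AdjoinRoot (X ^ 2 + X + 1 : ℤ[X])

theorem eis_base (p : ℕ) (hp : p.Prime) (hp6 : p % 6 = 1) :
    ∃ r : ℤ, (p : ℤ) ∣ r ^ 2 + r + 1 := by
  have : Fact p.Prime := ⟨hp⟩
  have : Fact (Nat.Prime 3) := ⟨Nat.prime_three⟩
  have hc : 3 ∣ Fintype.card (ZMod p)ˣ := by
    rw [ZMod.card_units]
    omega
  obtain ⟨u, hu⟩ := exists_prime_orderOf_dvd_card 3 hc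
  have h3 : (u : ZMod p) ^ 3 = 1 := by
    rw [← Units.val_pow_eq_pow_val, ← hu, pow_orderOf_eq_one, Units.val_one]
  have h1 : (u : ZMod p) ≠ 1 := by
    intro h
    have : u = 1 := Units.ext h
    rw [this, orderOf_one] at hu
    omega
  have h0 : (u : ZMod p) ^ 2 + u + 1 = 0 := by
    apply mul_left_cancel₀ (sub_ne_zero.mpr h1)
    linear_combination h3
  obtain ⟨r, hr⟩ := ZMod.intCast_surjective (u : ZMod p)
  refine ⟨r, ?_⟩
  rw [← ZMod.intCast_zmod_eq_zero_iff_dvd _ p]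
  push_cast
  rw [hr, h0]

theorem eis_not_dvd (p : ℕ) (hp : p.Prime) (hp6 : p % 6 = 1) (r : ℤ)
    (h : (p : ℤ) ∣ r ^ 2 + r + 1) : IsCoprime (2 * r + 1) (p : ℤ) := by
  rw [isCoprime_comm, (Nat.prime_iff_prime_int.mp hp).irreducible.coprime_iff_not_dvd]
  intro h2
  have h3 : (p : ℤ) ∣ ((3 : ℕ) : ℤ) := by
    have := dvd_sub (h.mul_left 4) (h2.mul_left (2 * r + 1))
    have e : 4 * (r ^ 2 + r + 1) - (2 * r + 1) * (2 * r + 1) = ((3 : ℕ) : ℤ) := by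
      push_cast
      ring
    rwa [e] at this
  rw [Int.natCast_dvd_natCast, Nat.prime_dvd_prime_iff_eq hp Nat.prime_three] at h3
  omega

theorem eis_hensel (p : ℕ) (hp : p.Prime) (hp6 : p % 6 = 1) (k : ℕ) :
    ∃ r : ℤ, (p : ℤ) ^ (k + 1) ∣ r ^ 2 + r + 1 := by
  induction k with
  | zero => simpa using eis_base p hp hp6
  | succ k ih =>
    obtain ⟨r, c, hc⟩ := ih
    obtain ⟨x, y, hxy⟩ := eis_not_dvd p hp hp6 r
      ((dvd_pow_self _ (Nat.succ_ne_zero k)).trans ⟨c, hc⟩)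
    refine ⟨r - c * x * (p : ℤ) ^ (k + 1), c * y + c ^ 2 * x ^ 2 * (p : ℤ) ^ k, ?_⟩
    linear_combination hc - c * (p : ℤ) ^ (k + 1) * hxy

theorem eis_prime_poly : Prime (X ^ 2 + X + 1 : ℤ[X]) := by
  rw [← Polynomial.cyclotomic_three]
  exact (Polynomial.cyclotomic.irreducible (by norm_num)).prime

theorem eis_domain : IsDomain Eisenstein := AdjoinRoot.isDomain_of_prime eis_prime_poly

theorem eis_unit_of_coprime (π : Eisenstein) (hπ : Prime π) (a b : ℤ) (h : IsCoprime a b)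
    (ha : π ∣ (a : Eisenstein)) (hb : π ∣ (b : Eisenstein)) : False := by
  obtain ⟨x, y, hxy⟩ := h
  apply hπ.not_dvd_one
  have := dvd_add (ha.mul_left (x : Eisenstein)) (hb.mul_left (y : Eisenstein))
  have e : (x : Eisenstein) * a + y * b = 1 := by
    rw [← Int.cast_mul, ← Int.cast_mul, ← Int.cast_add, hxy, Int.cast_one]
  rwa [e] at this

/-- `ζ` is congruent to an integer modulo `π ^ k`. -/
theorem eis_root (p k : ℕ) (hp : p.Prime) (hp6 : p % 6 = 1)
    (π : Eisenstein) (hπ : Prime π) (hdvd : π ∣ (p : Eisenstein)) :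
    ∃ s : ℤ, π ^ (k + 1) ∣ AdjoinRoot.root (X ^ 2 + X + 1 : ℤ[X]) - (s : Eisenstein) := by
  have := eis_domain
  obtain ⟨r, hr⟩ := eis_hensel p hp hp6 k
  have hco := eis_not_dvd p hp hp6 r ((dvd_pow_self _ (Nat.succ_ne_zero k)).trans hr)
  have hz : (AdjoinRoot.root (X ^ 2 + X + 1 : ℤ[X])) ^ 2
      + AdjoinRoot.root (X ^ 2 + X + 1 : ℤ[X]) + 1 = 0 := by
    have := AdjoinRoot.eval₂_root (X ^ 2 + X + 1 : ℤ[X])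
    simpa using this
  generalize (AdjoinRoot.root (X ^ 2 + X + 1 : ℤ[X]) : Eisenstein) = z at hz ⊢
  have h1 : π ^ (k + 1) ∣ (z - r) * (z - ((-1 - r : ℤ) : Eisenstein)) := by
    have h2 : π ^ (k + 1) ∣ (p : Eisenstein) ^ (k + 1) := pow_dvd_pow_of_dvd hdvd _
    obtain ⟨c, hc⟩ := hr
    have hc' : (r : Eisenstein) ^ 2 + r + 1 = (p : Eisenstein) ^ (k + 1) * c := by
      exact_mod_cast congrArg (Int.cast : ℤ → Eisenstein) hc
    have e : (z - r) * (z - ((-1 - r : ℤ) : Eisenstein)) = (p : Eisenstein) ^ (k + 1) * (-c) := by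
      push_cast
      linear_combination hz - hc'
    rw [e]
    exact h2.mul_right _
  by_cases h : π ∣ z - r
  · refine ⟨r, hπ.pow_dvd_of_dvd_mul_right _ ?_ h1⟩
    intro h'
    refine eis_unit_of_coprime π hπ _ _ hco ?_ (by exact_mod_cast hdvd)
    have := dvd_sub h' h
    convert this using 1
    push_cast
    ring
  · exact ⟨_, hπ.pow_dvd_of_dvd_mul_left _ h h1⟩

theorem eis_surj (p k : ℕ) (hp : p.Prime) (hp6 : p % 6 = 1)
    (π : Eisenstein) (hπ : Prime π) (hdvd : π ∣ (p : Eisenstein)) (x : Eisenstein) :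
    ∃ m : ℤ, π ^ (k + 1) ∣ x - (m : Eisenstein) := by
  obtain ⟨s, hs⟩ := eis_root p k hp hp6 π hπ hdvd
  obtain ⟨f, rfl⟩ := AdjoinRoot.mk_surjective x
  refine ⟨f.eval s, ?_⟩
  have h1 := Polynomial.sub_dvd_eval_sub (AdjoinRoot.root (X ^ 2 + X + 1 : ℤ[X]))
    ((s : ℤ) : Eisenstein) (f.map (Int.castRingHom Eisenstein))
  refine hs.trans ?_
  convert h1 using 2
  · rw [← AdjoinRoot.aeval_eq, Polynomial.aeval_def, Polynomial.eval_map]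
    rfl
  · rw [Polynomial.eval_intCast_map]
    simp

theorem eis_sq_not_dvd (p : ℕ) (hp : p.Prime) (hp6 : p % 6 = 1)
    (π : Eisenstein) (hπ : Prime π) (hdvd : π ∣ (p : Eisenstein)) :
    ¬ π ^ 2 ∣ (p : Eisenstein) := by
  have := eis_domain
  intro h
  obtain ⟨m, hm⟩ := eis_surj p 1 hp hp6 π hπ hdvd π
  have hm' : π ^ 2 ∣ π - (m : Eisenstein) := hm
  have hπm : π ∣ (m : Eisenstein) := by
    have := dvd_sub (dvd_refl π) ((dvd_pow_self π two_ne_zero).trans hm')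
    simpa using this
  by_cases hpm : (p : ℤ) ∣ m
  · have h3 : π ^ 2 ∣ (m : Eisenstein) := by
      refine h.trans ?_
      exact_mod_cast map_dvd (Int.castRingHom Eisenstein) hpm
    have h4 : π ^ 2 ∣ π := by simpa using dvd_add hm' h3
    obtain ⟨c, hc⟩ := h4
    apply hπ.not_dvd_one
    refine ⟨c, mul_left_cancel₀ hπ.ne_zero ?_⟩
    linear_combination hc
  · exact eis_unit_of_coprime π hπ _ _
      ((Nat.prime_iff_prime_int.mp hp).irreducible.coprime_iff_not_dvd.mpr hpm)
      (by exact_mod_cast hdvd) hπm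

theorem eis_int_dvd (p : ℕ) (hp : p.Prime) (hp6 : p % 6 = 1)
    (π : Eisenstein) (hπ : Prime π) (hdvd : π ∣ (p : Eisenstein)) (k : ℕ) :
    ∀ n : ℤ, π ^ k ∣ (n : Eisenstein) → (p : ℤ) ^ k ∣ n := by
  have := eis_domain
  induction k with
  | zero => simp
  | succ k ih =>
    intro n hn
    by_cases hpn : (p : ℤ) ∣ n
    · obtain ⟨m, rfl⟩ := hpn
      rw [pow_succ']
      refine mul_dvd_mul_left _ (ih m ?_)
      obtain ⟨g, hg⟩ := hdvd
      have hπg : ¬ π ∣ g := by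
        rintro ⟨c, rfl⟩
        exact eis_sq_not_dvd p hp hp6 π hπ ⟨_, hg⟩ ⟨c, by rw [hg]; ring⟩
      push_cast at hn
      rw [hg, pow_succ' π k, mul_assoc] at hn
      exact hπ.pow_dvd_of_dvd_mul_left _ hπg ((mul_dvd_mul_iff_left hπ.ne_zero).mp hn)
    · exact (eis_unit_of_coprime π hπ _ _
        ((Nat.prime_iff_prime_int.mp hp).irreducible.coprime_iff_not_dvd.mpr hpn)
        (by exact_mod_cast hdvd) ((dvd_pow_self π (Nat.succ_ne_zero k)).trans hn)).elim

/-- for a rational prime `p ≡ 1 (mod 6)`, a prime `π ∈ ℤ[ζ]` dividing `p`,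
and `k ≥ 1`, the canonical ring homomorphism `ℤ → ℤ[ζ]/(π^k)` is surjective with kernel
`p^k ℤ`, inducing a ring isomorphism `ZMod (p^k) ≃ ℤ[ζ]/(π^k)`; in particular the
additive group of `ℤ[ζ]/(π^k)` is cyclic of order `p^k`, generated by the class of `1`. -/
theorem eisenstein_quotient_split_prime_power (p k : ℕ) (hp : p.Prime) (hp6 : p % 6 = 1)
    (π : Eisenstein) (hπ : Prime π) (hdvd : π ∣ (p : Eisenstein)) (hk : 1 ≤ k) :
    Function.Surjective
      (Int.castRingHom (Eisenstein ⧸ Ideal.span {π ^ k})) ∧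
    RingHom.ker (Int.castRingHom (Eisenstein ⧸ Ideal.span {π ^ k})) =
      Ideal.span {((p : ℤ) ^ k)} ∧
    (∃ e : ZMod (p ^ k) ≃+* (Eisenstein ⧸ Ideal.span {π ^ k}),
      ∀ a : ℤ, e (a : ZMod (p ^ k)) = ((a : Eisenstein ⧸ Ideal.span {π ^ k}))) ∧
    AddSubgroup.zmultiples (1 : Eisenstein ⧸ Ideal.span {π ^ k}) = ⊤ ∧
    Nat.card (Eisenstein ⧸ Ideal.span {π ^ k}) = p ^ k := by
  have hsurj : Function.Surjective (Int.castRingHom (Eisenstein ⧸ Ideal.span {π ^ k})) := by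
    intro y
    obtain ⟨x, rfl⟩ := Ideal.Quotient.mk_surjective y
    obtain ⟨m, hm⟩ := eis_surj p (k - 1) hp hp6 π hπ hdvd x
    rw [Nat.sub_add_cancel hk] at hm
    refine ⟨m, ?_⟩
    have := Ideal.Quotient.eq.mpr (Ideal.mem_span_singleton.mpr hm)
    rw [this]
    simp
  have hiff : ∀ n : ℤ, ((n : Eisenstein ⧸ Ideal.span {π ^ k}) = 0 ↔ (p : ℤ) ^ k ∣ n) := by
    intro n
    have e : (n : Eisenstein ⧸ Ideal.span {π ^ k})
        = Ideal.Quotient.mk (Ideal.span {π ^ k}) (n : Eisenstein) := by simp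
    rw [e, Ideal.Quotient.eq_zero_iff_mem, Ideal.mem_span_singleton]
    refine ⟨eis_int_dvd p hp hp6 π hπ hdvd k n, fun h => ?_⟩
    refine (pow_dvd_pow_of_dvd hdvd k).trans ?_
    exact_mod_cast map_dvd (Int.castRingHom Eisenstein) h
  have hker : RingHom.ker (Int.castRingHom (Eisenstein ⧸ Ideal.span {π ^ k})) =
      Ideal.span {((p : ℤ) ^ k)} := by
    ext n
    rw [RingHom.mem_ker, Ideal.mem_span_singleton]
    exact hiff n
  have : CharP (Eisenstein ⧸ Ideal.span {π ^ k}) (p ^ k) := by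
    refine ⟨fun n => ?_⟩
    have := hiff n
    rw [Int.cast_natCast] at this
    rw [this]
    exact_mod_cast Iff.rfl
  have hbij : Function.Bijective
      (ZMod.castHom (dvd_refl (p ^ k)) (Eisenstein ⧸ Ideal.span {π ^ k})) := by
    refine ⟨ZMod.castHom_injective _, fun y => ?_⟩
    obtain ⟨m, rfl⟩ := hsurj y
    exact ⟨(m : ZMod (p ^ k)), by simp⟩
  refine ⟨hsurj, hker, ⟨RingEquiv.ofBijective _ hbij, fun a => ?_⟩, ?_, ?_⟩
  · exact map_intCast (ZMod.castHom (dvd_refl (p ^ k)) (Eisenstein ⧸ Ideal.span {π ^ k})) a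
  · rw [eq_top_iff]
    rintro y -
    obtain ⟨m, rfl⟩ := hsurj y
    exact ⟨m, by simp⟩
  · rw [← Nat.card_congr (Equiv.ofBijective _ hbij), Nat.card_zmod]
end

section
/- Let k ≥ 1. Then the map (a, b) ↦ a·1 + b·i induces an isomorphism of additive groups ZMod (2^k) × ZMod (2^k) ≃ ℤ[i]/((1+i)^{2k}); in particular the additive group of ℤ[i]/((1+i)^{2k}) is generated by the classes of 1 and i and is isomorphic to ℤ/2^kℤ ⊕ ℤ/2^kℤ. -/
local notation "ℤ[i]" => GaussianInt

/-- The imaginary unit in the Gaussian integers. -/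
def gi : ℤ[i] := ⟨0, 1⟩

theorem mk_eq_zero_iff_aux (k : ℕ) (z : ℤ[i]) :
    Ideal.Quotient.mk (Ideal.span {((1 + gi) ^ (2 * k))}) z = 0 ↔
      ((2 ^ k : ℕ) : ℤ) ∣ z.re ∧ ((2 ^ k : ℕ) : ℤ) ∣ z.im := by
  have h1 : (1 + gi) ^ 2 = 2 * gi := by
    ext <;> simp [gi, pow_two]
  have hu : IsUnit gi := IsUnit.of_mul_eq_one (-gi) (by ext <;> simp [gi])
  rw [Ideal.Quotient.eq_zero_iff_mem, Ideal.mem_span_singleton, pow_mul, h1, mul_pow,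
    (hu.pow k).mul_right_dvd, ← Zsqrtd.intCast_dvd]
  push_cast
  rfl

/-- for `k ≥ 1`, the map `(a, b) ↦ a·1 + b·i` induces an additive-group
isomorphism `ZMod (2^k) × ZMod (2^k) ≃ ℤ[i]/((1+i)^(2k))`. -/
theorem gaussian_quotient_even_power_of_one_add_i (k : ℕ) (hk : 1 ≤ k) :
    ∃ e : (ZMod (2 ^ k) × ZMod (2 ^ k)) ≃+
        (ℤ[i] ⧸ Ideal.span {((1 + gi) ^ (2 * k))}),
      ∀ a b : ℤ,
        e ((a : ZMod (2 ^ k)), (b : ZMod (2 ^ k))) =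
          Ideal.Quotient.mk (Ideal.span {((1 + gi) ^ (2 * k))})
            ((a : ℤ[i]) * 1 + (b : ℤ[i]) * gi) := by
  let I : Ideal ℤ[i] := Ideal.span {((1 + gi) ^ (2 * k))}
  let g : ℤ[i] → (ℤ →+ ℤ[i] ⧸ I) := fun w =>
    (Ideal.Quotient.mk I).toAddMonoidHom.comp
      ((AddMonoidHom.mulRight w).comp (Int.castAddHom ℤ[i]))
  have hg : ∀ w (a : ℤ), g w a = Ideal.Quotient.mk I ((a : ℤ[i]) * w) := fun w a => rfl
  have hg0 : ∀ w, g w ((2 ^ k : ℕ) : ℤ) = 0 := by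
    intro w
    rw [hg]
    refine (mk_eq_zero_iff_aux k _).2 ⟨?_, ?_⟩
    · rw [Zsqrtd.re_smul]; exact dvd_mul_right _ _
    · rw [Zsqrtd.im_smul]; exact dvd_mul_right _ _
  let f : ZMod (2 ^ k) × ZMod (2 ^ k) →+ ℤ[i] ⧸ I :=
    (ZMod.lift (2 ^ k) ⟨g 1, hg0 1⟩).coprod (ZMod.lift (2 ^ k) ⟨g gi, hg0 gi⟩)
  have hf : ∀ a b : ℤ, f ((a : ZMod (2 ^ k)), (b : ZMod (2 ^ k))) =
      Ideal.Quotient.mk I ((a : ℤ[i]) * 1 + (b : ℤ[i]) * gi) := by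
    intro a b
    rw [map_add, ← hg, ← hg]
    simp only [f, AddMonoidHom.coprod_apply, ZMod.lift_coe]
  have hdec : ∀ a b : ℤ, ((a : ℤ[i]) * 1 + (b : ℤ[i]) * gi) = ⟨a, b⟩ := by
    intro a b
    ext <;> simp [gi]
  have hbij : Function.Bijective f := by
    constructor
    · rw [injective_iff_map_eq_zero]
      rintro ⟨x, y⟩ h
      obtain ⟨a, rfl⟩ := ZMod.intCast_surjective x
      obtain ⟨b, rfl⟩ := ZMod.intCast_surjective y
      rw [hf, hdec] at h
      obtain ⟨h1, h2⟩ := (mk_eq_zero_iff_aux k _).1 h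
      exact Prod.ext ((ZMod.intCast_zmod_eq_zero_iff_dvd a _).2 h1)
        ((ZMod.intCast_zmod_eq_zero_iff_dvd b _).2 h2)
    · intro q
      obtain ⟨z, rfl⟩ := Ideal.Quotient.mk_surjective q
      exact ⟨((z.re : ZMod (2 ^ k)), (z.im : ZMod (2 ^ k))), by rw [hf, hdec]⟩
  exact ⟨AddEquiv.ofBijective f hbij, hf⟩
end

section
/- Let k ≥ 1. Then the map (a, b) ↦ a·(1−i) + b·i induces an isomorphism of additive groups ZMod (2^{k−1}) × ZMod (2^k) ≃ ℤ[i]/((1+i)^{2k−1}); in particular the additive group of ℤ[i]/((1+i)^{2k−1}) is generated by the classes of 1−i and i and is isomorphic to ℤ/2^{k−1}ℤ ⊕ ℤ/2^kℤ. -/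
local notation "ℤ[i]" => GaussianInt

theorem one_add_gi_pow (n : ℕ) :
    (1 + gi) ^ (2 * (n + 1) - 1) = gi ^ n * ((2 : ℤ[i]) ^ n * (1 + gi)) := by
  have h2 : (1 + gi) ^ 2 = 2 * gi := by
    rw [pow_two]
    ext <;> simp [gi]
  have : 2 * (n + 1) - 1 = 2 * n + 1 := by omega
  rw [this, pow_succ, pow_mul, h2, mul_pow]
  ring

theorem span_eq_aux (n : ℕ) :
    Ideal.span {((1 + gi) ^ (2 * (n + 1) - 1))} = Ideal.span {((2 : ℤ[i]) ^ n * (1 + gi))} := by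
  rw [one_add_gi_pow]
  apply Ideal.span_singleton_mul_left_unit
  apply IsUnit.pow
  refine IsUnit.of_mul_eq_one (-gi) ?_
  ext <;> simp [gi]

theorem mem_aux (n : ℕ) (a b : ℤ) :
    ((a : ℤ[i]) * (1 - gi) + (b : ℤ[i]) * gi) ∈ Ideal.span {((1 + gi) ^ (2 * (n + 1) - 1))} ↔
      (2 : ℤ) ^ n ∣ a ∧ (2 : ℤ) ^ (n + 1) ∣ b := by
  rw [span_eq_aux, Ideal.mem_span_singleton]
  have hc : (2 : ℤ[i]) ^ n = (((2 : ℤ) ^ n : ℤ) : ℤ[i]) := by push_cast; rfl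
  rw [hc, pow_succ]
  generalize (2 : ℤ) ^ n = m
  constructor
  · rintro ⟨c, hc⟩
    have h1 := congrArg Zsqrtd.re hc
    have h2 := congrArg Zsqrtd.im hc
    simp [gi] at h1 h2
    exact ⟨⟨c.re - c.im, by linarith⟩, ⟨c.re, by linarith⟩⟩
  · rintro ⟨⟨s, rfl⟩, ⟨t, rfl⟩⟩
    refine ⟨⟨t, t - s⟩, ?_⟩
    ext <;> simp [gi] <;> ring

/-- for `k ≥ 1`, the map `(a, b) ↦ a·(1−i) + b·i` induces an additive-group
isomorphism `ZMod (2^(k-1)) × ZMod (2^k) ≃ ℤ[i]/((1+i)^(2k-1))`. -/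
theorem gaussian_quotient_odd_power_of_one_add_i (k : ℕ) (hk : 1 ≤ k) :
    ∃ e : (ZMod (2 ^ (k - 1)) × ZMod (2 ^ k)) ≃+
        (ℤ[i] ⧸ Ideal.span {((1 + gi) ^ (2 * k - 1))}),
      ∀ a b : ℤ,
        e ((a : ZMod (2 ^ (k - 1))), (b : ZMod (2 ^ k))) =
          Ideal.Quotient.mk (Ideal.span {((1 + gi) ^ (2 * k - 1))})
            ((a : ℤ[i]) * (1 - gi) + (b : ℤ[i]) * gi) := by
  obtain ⟨n, rfl⟩ : ∃ n, k = n + 1 := ⟨k - 1, by omega⟩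
  change ∃ e : (ZMod (2 ^ n) × ZMod (2 ^ (n + 1))) ≃+
        (ℤ[i] ⧸ Ideal.span {((1 + gi) ^ (2 * (n + 1) - 1))}),
      ∀ a b : ℤ,
        e ((a : ZMod (2 ^ n)), (b : ZMod (2 ^ (n + 1)))) =
          Ideal.Quotient.mk (Ideal.span {((1 + gi) ^ (2 * (n + 1) - 1))})
            ((a : ℤ[i]) * (1 - gi) + (b : ℤ[i]) * gi)
  set I := Ideal.span {((1 + gi) ^ (2 * (n + 1) - 1))} with hI
  let q : ℤ[i] →+ ℤ[i] ⧸ I := (Ideal.Quotient.mk I).toAddMonoidHom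
  let c : ℤ →+ ℤ[i] := (Int.castRingHom ℤ[i]).toAddMonoidHom
  let f : ℤ →+ ℤ[i] ⧸ I := q.comp ((AddMonoidHom.mulRight (1 - gi)).comp c)
  let g : ℤ →+ ℤ[i] ⧸ I := q.comp ((AddMonoidHom.mulRight gi).comp c)
  have hfg : ∀ a b : ℤ, f a + g b =
      Ideal.Quotient.mk I ((a : ℤ[i]) * (1 - gi) + (b : ℤ[i]) * gi) := by
    intro a b
    rw [map_add]
    rfl
  have hker : ∀ a b : ℤ, f a + g b = 0 ↔ (2 : ℤ) ^ n ∣ a ∧ (2 : ℤ) ^ (n + 1) ∣ b := by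
    intro a b
    rw [hfg, Ideal.Quotient.eq_zero_iff_mem, hI, mem_aux]
  have hf : f ((2 ^ n : ℕ) : ℤ) = 0 := by
    have := (hker ((2 ^ n : ℕ) : ℤ) 0).2 ⟨by simp, by simp⟩
    rwa [map_zero, add_zero] at this
  have hg : g ((2 ^ (n + 1) : ℕ) : ℤ) = 0 := by
    have := (hker 0 ((2 ^ (n + 1) : ℕ) : ℤ)).2 ⟨by simp, by simp⟩
    rwa [map_zero, zero_add] at this
  let F : ZMod (2 ^ n) × ZMod (2 ^ (n + 1)) →+ ℤ[i] ⧸ I :=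
    (ZMod.lift _ ⟨f, hf⟩).coprod (ZMod.lift _ ⟨g, hg⟩)
  have hF : ∀ a b : ℤ, F ((a : ZMod (2 ^ n)), (b : ZMod (2 ^ (n + 1)))) = f a + g b := by
    intro a b
    simp [F, AddMonoidHom.coprod_apply, ZMod.lift_coe]
  have hbij : Function.Bijective F := by
    constructor
    · rw [injective_iff_map_eq_zero]
      rintro ⟨x, y⟩ h
      obtain ⟨a, rfl⟩ := ZMod.intCast_surjective x
      obtain ⟨b, rfl⟩ := ZMod.intCast_surjective y
      rw [hF, hker] at h
      ext
      · exact (ZMod.intCast_zmod_eq_zero_iff_dvd _ _).2 (by exact_mod_cast h.1)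
      · exact (ZMod.intCast_zmod_eq_zero_iff_dvd _ _).2 (by exact_mod_cast h.2)
    · intro z
      obtain ⟨w, rfl⟩ := Ideal.Quotient.mk_surjective z
      refine ⟨((w.re : ZMod (2 ^ n)), ((w.im + w.re : ℤ) : ZMod (2 ^ (n + 1)))), ?_⟩
      rw [hF, hfg]
      congr 1
      ext <;> simp [gi]
  exact ⟨AddEquiv.ofBijective F hbij, fun a b => (hF a b).trans (hfg a b)⟩
end

section
/- Let k ≥ 1. Then the map (a, b) ↦ a·1 + b·ζ induces an isomorphism of additive groups ZMod (3^k) × ZMod (3^k) ≃ ℤ[ζ]/((1−ζ)^{2k}); in particular the additive group of ℤ[ζ]/((1−ζ)^{2k}) is generated by the classes of 1 and ζ and is isomorphic to ℤ/3^kℤ ⊕ ℤ/3^kℤ. -/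
open Polynomial

/-- The distinguished primitive cube root of unity in the Eisenstein integers. -/
noncomputable def ζ : Eisenstein := AdjoinRoot.root (X ^ 2 + X + 1 : ℤ[X])

theorem eis_monic : (X ^ 2 + X + 1 : ℤ[X]).Monic := by monicity!

theorem eis_natDegree : (X ^ 2 + X + 1 : ℤ[X]).natDegree = 2 := by compute_degree!

theorem eis_zeta_rel : ζ ^ 2 + ζ + 1 = 0 := by
  have h := AdjoinRoot.eval₂_root (X ^ 2 + X + 1 : ℤ[X])
  simpa [eval₂_add, ζ] using h

theorem eis_mk_linear (a b : ℤ) :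
    AdjoinRoot.mk (X ^ 2 + X + 1 : ℤ[X]) (C b * X + C a) = (a : Eisenstein) + (b : Eisenstein) * ζ := by
  have h (c : ℤ) : AdjoinRoot.mk (X ^ 2 + X + 1 : ℤ[X]) (C c) = (c : Eisenstein) := by
    rw [← map_intCast (AdjoinRoot.mk (X ^ 2 + X + 1 : ℤ[X]))]; simp
  rw [map_add, map_mul, h, h, AdjoinRoot.mk_X, ζ]
  ring

theorem eis_exists (x : Eisenstein) : ∃ a b : ℤ, x = (a : Eisenstein) + (b : Eisenstein) * ζ := by
  obtain ⟨p, rfl⟩ := AdjoinRoot.mk_surjective x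
  have hd : (p %ₘ (X ^ 2 + X + 1 : ℤ[X])).natDegree ≤ 1 := by
    have := natDegree_modByMonic_lt p eis_monic (by
      intro h
      have h2 := eis_natDegree
      rw [h] at h2
      simp at h2)
    rw [eis_natDegree] at this
    omega
  obtain ⟨b, a, h⟩ := exists_eq_X_add_C_of_natDegree_le_one hd
  refine ⟨a, b, ?_⟩
  rw [← eis_mk_linear, ← h, AdjoinRoot.mk_eq_mk]
  have := modByMonic_add_div p (X ^ 2 + X + 1 : ℤ[X])
  exact ⟨p /ₘ (X ^ 2 + X + 1 : ℤ[X]), by linear_combination -this⟩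

theorem eis_indep (a b : ℤ) (h : (a : Eisenstein) + (b : Eisenstein) * ζ = 0) : a = 0 ∧ b = 0 := by
  rw [← eis_mk_linear, AdjoinRoot.mk_eq_zero] at h
  have h0 : (C b * X + C a : ℤ[X]) = 0 := by
    apply eq_zero_of_dvd_of_natDegree_lt h
    rw [eis_natDegree]
    exact lt_of_le_of_lt natDegree_linear_le (by norm_num)
  have h1 := congrArg (fun p => coeff p 0) h0
  have h2 := congrArg (fun p => coeff p 1) h0
  simp only [coeff_add, coeff_C_mul, coeff_X, coeff_C, coeff_zero] at h1 h2
  norm_num at h1 h2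
  exact ⟨h1, h2⟩

theorem eis_span (k : ℕ) :
    Ideal.span {((1 - ζ) ^ (2 * k))} = Ideal.span {((3 : Eisenstein) ^ k)} := by
  have hu : IsUnit (-ζ ^ 2) := by
    refine IsUnit.of_mul_eq_one (-ζ) ?_
    linear_combination (ζ - 1) * eis_zeta_rel
  have h : (1 - ζ) ^ 2 * (-ζ ^ 2) = 3 := by
    linear_combination (-ζ ^ 2 + 3 * ζ - 3) * eis_zeta_rel
  rw [pow_mul]
  rw [← h, mul_pow, Ideal.span_singleton_mul_right_unit (hu.pow k)]

/-- for `k ≥ 1`, the map `(a, b) ↦ a·1 + b·ζ` induces an additive-group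
isomorphism `ZMod (3^k) × ZMod (3^k) ≃ ℤ[ζ]/((1−ζ)^(2k))`. -/
theorem eisenstein_quotient_even_power_of_one_sub_zeta (k : ℕ) (hk : 1 ≤ k) :
    ∃ e : (ZMod (3 ^ k) × ZMod (3 ^ k)) ≃+
        (Eisenstein ⧸ Ideal.span {((1 - ζ) ^ (2 * k))}),
      ∀ a b : ℤ,
        e ((a : ZMod (3 ^ k)), (b : ZMod (3 ^ k))) =
          Ideal.Quotient.mk (Ideal.span {((1 - ζ) ^ (2 * k))})
            ((a : Eisenstein) * 1 + (b : Eisenstein) * ζ) := by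
  rw [eis_span]
  set I := Ideal.span {((3 : Eisenstein) ^ k)} with hI
  have h3 : Ideal.Quotient.mk I ((3 : Eisenstein) ^ k) = 0 :=
    Ideal.Quotient.eq_zero_iff_mem.mpr (Ideal.mem_span_singleton_self _)
  let F (y : Eisenstein) : ℤ →+ Eisenstein ⧸ I :=
    ((Ideal.Quotient.mk I).toAddMonoidHom.comp (AddMonoidHom.mulRight y)).comp
      (Int.castAddHom Eisenstein)
  have hF (y : Eisenstein) (a : ℤ) : F y a = Ideal.Quotient.mk I ((a : Eisenstein) * y) := rfl
  have hF0 (y : Eisenstein) : F y ((3 ^ k : ℕ) : ℤ) = 0 := by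
    rw [hF, map_mul]
    push_cast
    rw [h3, zero_mul]
  let G (y : Eisenstein) : ZMod (3 ^ k) →+ Eisenstein ⧸ I := ZMod.lift (3 ^ k) ⟨F y, hF0 y⟩
  have hG (y : Eisenstein) (a : ℤ) :
      G y (a : ZMod (3 ^ k)) = Ideal.Quotient.mk I ((a : Eisenstein) * y) := by
    simp only [G, ZMod.lift_coe]
    exact hF y a
  let E := (G 1).coprod (G ζ)
  have hE (a b : ℤ) : E ((a : ZMod (3 ^ k)), (b : ZMod (3 ^ k))) =
      Ideal.Quotient.mk I ((a : Eisenstein) * 1 + (b : Eisenstein) * ζ) := by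
    simp only [E, AddMonoidHom.coprod_apply, hG, map_add]
  have hbij : Function.Bijective E := by
    constructor
    · rw [injective_iff_map_eq_zero]
      rintro ⟨x, y⟩ hxy
      obtain ⟨a, rfl⟩ := ZMod.intCast_surjective x
      obtain ⟨b, rfl⟩ := ZMod.intCast_surjective y
      rw [hE, Ideal.Quotient.eq_zero_iff_mem, hI, Ideal.mem_span_singleton] at hxy
      obtain ⟨z, hz⟩ := hxy
      obtain ⟨c, d, rfl⟩ := eis_exists z
      obtain ⟨h1, h2⟩ := eis_indep (a - 3 ^ k * c) (b - 3 ^ k * d) (by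
        push_cast
        linear_combination hz)
      have ha : (a : ZMod (3 ^ k)) = 0 := by
        rw [ZMod.intCast_zmod_eq_zero_iff_dvd]
        exact ⟨c, by push_cast; linarith⟩
      have hb : (b : ZMod (3 ^ k)) = 0 := by
        rw [ZMod.intCast_zmod_eq_zero_iff_dvd]
        exact ⟨d, by push_cast; linarith⟩
      rw [ha, hb]
      rfl
    · intro q
      obtain ⟨x, rfl⟩ := Ideal.Quotient.mk_surjective q
      obtain ⟨a, b, rfl⟩ := eis_exists x
      exact ⟨((a : ZMod (3 ^ k)), (b : ZMod (3 ^ k))), by rw [hE, mul_one]⟩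
  exact ⟨AddEquiv.ofBijective E hbij, hE⟩
end

section
/- Let p be a rational prime with p ≡ 1 (mod 4), and let π, π' ∈ ℤ[i] be prime elements such that π·π' is associated to (p : ℤ[i]). Then for all integers 0 ≤ l ≤ μ, the additive group of the quotient ℤ[i]/(π^l · π'^{μ−l}) is isomorphic to ZMod (p^l) × ZMod (p^{μ−l}). -/
local notation "ℤ[i]" => GaussianInt

lemma quot_equiv_of_coprime (z : GaussianInt) (n : ℕ) (hn : z.norm = n)
    (h : IsCoprime z.re z.im) :
    Nonempty ((GaussianInt ⧸ Ideal.span {z}) ≃+ ZMod n) := by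
  let f : ℤ →+* GaussianInt ⧸ Ideal.span {z} := Int.castRingHom _
  have hf : ∀ k : ℤ, f k = Ideal.Quotient.mk _ (k : GaussianInt) := fun k => by simp [f]
  have hnz : (n : ℤ) = z.re * z.re + z.im * z.im := by
    rw [← hn, Zsqrtd.norm_def]; ring
  have hker : RingHom.ker f = Ideal.span {(n : ℤ)} := by
    ext k
    rw [RingHom.mem_ker, hf, Ideal.Quotient.eq_zero_iff_mem, Ideal.mem_span_singleton,
      Ideal.mem_span_singleton]
    constructor
    · rintro ⟨w, hw⟩
      have h1 : ((n : ℤ) : GaussianInt) ∣ star z * (k : GaussianInt) := by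
        rw [← hn, Zsqrtd.norm_eq_mul_conj, hw]
        exact ⟨w, by ring⟩
      rw [Zsqrtd.intCast_dvd] at h1
      obtain ⟨h2, h3⟩ := h1
      simp at h2 h3
      obtain ⟨u, v, huv⟩ := h
      have : k = u * (z.re * k) + v * (z.im * k) := by linear_combination (-k) * huv
      rw [this]
      exact dvd_add (h2.mul_left _) (h3.mul_left _)
    · rintro ⟨w, rfl⟩
      rw [← hn]
      push_cast
      rw [Zsqrtd.norm_eq_mul_conj]
      exact ⟨star z * w, by ring⟩
  have hsurj : Function.Surjective f := by
    have hc : IsCoprime z.im n := by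
      have h1 : IsCoprime z.im (z.re * z.re) := IsCoprime.mul_right h.symm h.symm
      rw [hnz]
      exact h1.add_mul_left_right z.im
    obtain ⟨u, v, huv⟩ := hc
    intro y
    obtain ⟨x, rfl⟩ := Ideal.Quotient.mk_surjective y
    refine ⟨x.re - x.im * u * z.re, ?_⟩
    rw [hf, Ideal.Quotient.eq, Ideal.mem_span_singleton]
    -- the difference is explicit
    refine ⟨-(x.im * u : ℤ) - ((x.im * v : ℤ) : GaussianInt) * ⟨0, 1⟩ * star z, ?_⟩
    rw [hnz] at huv
    ext
    · simp
      ring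
    · simp
      linear_combination x.im * huv
  exact ⟨((Int.quotientSpanNatEquivZMod n).symm.trans
    ((Ideal.quotEquivOfEq hker.symm).trans
      (RingHom.quotientKerEquivOfSurjective hsurj))).symm.toAddEquiv⟩

lemma not_dvd_aux (p : ℕ) (hp : p.Prime) (hp4 : p % 4 = 1) (π π' : GaussianInt)
    (hπ : Prime π) (hπ' : Prime π') (hN : π.norm = p)
    (hassoc : Associated (π * π') (p : GaussianInt)) : ¬ π' ∣ π := by
  intro hd
  have h1 : ((p : ℤ) : GaussianInt) ∣ π * π := by
    push_cast
    exact hassoc.symm.dvd.trans (mul_dvd_mul_left _ hd)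
  rw [Zsqrtd.intCast_dvd] at h1
  have h2 := h1.1
  simp at h2
  rw [Zsqrtd.norm_def] at hN
  have hpZ : Prime (p : ℤ) := Nat.prime_iff_prime_int.mp hp
  have hp2 : ¬ (p : ℤ) ∣ 2 := by
    intro h
    have := Int.le_of_dvd (by norm_num) h
    have := hp.two_le
    have : p = 2 := by omega
    subst this
    omega
  have key : ∀ a : ℤ, (p : ℤ) ∣ 2 * (a * a) → (p : ℤ) ∣ a := by
    intro a h
    rcases hpZ.dvd_or_dvd h with h | h
    · exact absurd h hp2
    · exact (hpZ.dvd_or_dvd h).elim id id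
  obtain ⟨c, hc⟩ := h2
  obtain ⟨a, ha⟩ := key π.re ⟨c + 1, by linarith⟩
  obtain ⟨b, hb⟩ := key π.im ⟨1 - c, by linarith⟩
  rw [ha, hb] at hN
  have h3 : (p : ℤ) * (p * (a * a + b * b)) = p * 1 := by linarith
  have h4 := mul_left_cancel₀ hpZ.ne_zero h3
  exact hpZ.not_isUnit (IsUnit.of_mul_eq_one _ h4)

lemma quot_pow_aux (p : ℕ) (hp : p.Prime) (π π' : GaussianInt)
    (hπ' : Prime π') (hN : π.norm = p) (hnd : ¬ π' ∣ π)
    (hassoc : Associated (π * π') (p : GaussianInt)) (l : ℕ) :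
    Nonempty ((GaussianInt ⧸ Ideal.span {π ^ l}) ≃+ ZMod (p ^ l)) := by
  have hNl : (π ^ l).norm = ((p ^ l : ℕ) : ℤ) := by
    have := map_pow Zsqrtd.normMonoidHom π l
    push_cast
    rw [← hN]
    exact this
  apply quot_equiv_of_coprime _ _ hNl
  rw [Int.isCoprime_iff_gcd_eq_one]
  by_contra hg
  obtain ⟨q, hq, hqd⟩ := Nat.exists_prime_and_dvd hg
  have hq1 : (q : ℤ) ∣ (π ^ l).re := (Int.natCast_dvd_natCast.mpr hqd).trans (Int.gcd_dvd_left ..)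
  have hq2 : (q : ℤ) ∣ (π ^ l).im := (Int.natCast_dvd_natCast.mpr hqd).trans (Int.gcd_dvd_right ..)
  have hqp : q ∣ p ^ l := by
    rw [← Int.natCast_dvd_natCast, ← hNl, Zsqrtd.norm_def]
    exact dvd_sub (hq1.mul_left _) (hq2.mul_left _)
  have := (Nat.prime_dvd_prime_iff_eq hq hp).mp (hq.dvd_of_dvd_pow hqp)
  subst this
  have h1 : ((q : ℤ) : GaussianInt) ∣ π ^ l := (Zsqrtd.intCast_dvd _ _).mpr ⟨hq1, hq2⟩
  push_cast at h1
  exact hnd (hπ'.dvd_of_dvd_pow ((Dvd.intro_left π rfl).trans (hassoc.dvd.trans h1)))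

lemma norm_aux (p : ℕ) (hp : p.Prime) (π π' : GaussianInt)
    (hπ : Prime π) (hπ' : Prime π')
    (hassoc : Associated (π * π') (p : GaussianInt)) : π.norm = p ∧ π'.norm = p := by
  have h1 : π.norm * π'.norm = p * p := by
    have := Zsqrtd.norm_eq_of_associated (by norm_num) hassoc
    rwa [Zsqrtd.norm_mul, Zsqrtd.norm_natCast] at this
  have h2 : π.norm.natAbs * π'.norm.natAbs = p ^ 2 := by
    rw [← Int.natAbs_mul, h1, ← Int.natCast_mul, Int.natAbs_natCast, sq]
  have h3 := (hp.mul_eq_prime_sq_iff (mt Zsqrtd.norm_eq_one_iff.1 hπ.not_unit)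
    (mt Zsqrtd.norm_eq_one_iff.1 hπ'.not_unit)).1 h2
  rw [← GaussianInt.abs_natCast_norm π, ← GaussianInt.abs_natCast_norm π', h3.1, h3.2]
  exact ⟨rfl, rfl⟩

/-- for a rational prime `p ≡ 1 (mod 4)` and primes `π, π' ∈ ℤ[i]` with
`π·π'` associated to `p`, for all `0 ≤ l ≤ μ` the additive group of
`ℤ[i]/(π^l · π'^(μ−l))` is isomorphic to `ZMod (p^l) × ZMod (p^(μ−l))`. -/
theorem gaussian_quotient_mixed_prime_powers (p : ℕ) (hp : p.Prime) (hp4 : p % 4 = 1)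
    (π π' : ℤ[i]) (hπ : Prime π) (hπ' : Prime π')
    (hassoc : Associated (π * π') (p : ℤ[i])) :
    ∀ μ l : ℕ, l ≤ μ →
      Nonempty ((ℤ[i] ⧸ Ideal.span {π ^ l * π' ^ (μ - l)}) ≃+
        (ZMod (p ^ l) × ZMod (p ^ (μ - l)))) := by
  intro μ l hl
  obtain ⟨hN, hN'⟩ := norm_aux p hp π π' hπ hπ' hassoc
  have hassoc' : Associated (π' * π) (p : GaussianInt) := by rwa [mul_comm]
  have hnd := not_dvd_aux p hp hp4 π π' hπ hπ' hN hassoc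
  have hnd' := not_dvd_aux p hp hp4 π' π hπ' hπ hN' hassoc'
  obtain ⟨e1⟩ := quot_pow_aux p hp π π' hπ' hN hnd hassoc l
  obtain ⟨e2⟩ := quot_pow_aux p hp π' π hπ hN' hnd' hassoc' (μ - l)
  have hc : IsCoprime (π ^ l) (π' ^ (μ - l)) :=
    IsCoprime.pow ((hπ.irreducible.coprime_iff_not_dvd).mpr hnd')
  have hc' : IsCoprime (Ideal.span {π ^ l}) (Ideal.span {π' ^ (μ - l)}) :=
    (Ideal.isCoprime_span_singleton_iff _ _).mpr hc
  exact ⟨((Ideal.quotEquivOfEq (Ideal.span_singleton_mul_span_singleton _ _).symm).trans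
    (Ideal.quotientMulEquivQuotientProd _ _ hc')).toAddEquiv.trans (e1.prodCongr e2)⟩
end

section
/- Let k, l, m ≥ 1 be integers with 1/(2k+1) + 1/(2l+1) + 1/(2m+1) < 1, and let Δ = Δ(2k+1, 2l+1, 2m+1) with canonical generators c₀, c₁, c₂ (so all three link periods are odd). Then c₀, c₁, c₂ are pairwise conjugate in Δ, and the centralizer of c₀ in Δ equals the subgroup generated by c₀ and w = (c₂c₀)^m (c₁c₂)^l (c₀c₁)^k; moreover this centralizer is isomorphic to ℤ/2ℤ × ℤ (c₀ has order 2, w has infinite order, and they commute and generate their direct product). -/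
/-- Relators for the reflection group
`⟨c₀,c₁,c₂ ∣ c₀² = c₁² = c₂² = (c₀c₁)^k' = (c₁c₂)^l' = (c₂c₀)^m' = 1⟩`. -/
def triRels (k' l' m' : ℕ) : Set (FreeGroup (Fin 3)) :=
  {FreeGroup.of 0 ^ 2, FreeGroup.of 1 ^ 2, FreeGroup.of 2 ^ 2,
   (FreeGroup.of 0 * FreeGroup.of 1) ^ k',
   (FreeGroup.of 1 * FreeGroup.of 2) ^ l',
   (FreeGroup.of 2 * FreeGroup.of 0) ^ m'}

/-- The group `Δ(k', l', m')` with the above presentation. -/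
def Tri (k' l' m' : ℕ) : Type := PresentedGroup (triRels k' l' m')

instance (k' l' m' : ℕ) : Group (Tri k' l' m') :=
  inferInstanceAs (Group (PresentedGroup (triRels k' l' m')))

/-- The canonical generators `c₀, c₁, c₂` of `Δ(k', l', m')`. -/
def cgen (k' l' m' : ℕ) (j : Fin 3) : Tri k' l' m' :=
  PresentedGroup.of (rels := triRels k' l' m') j


namespace TriProof
open CoxeterSystem

abbrev V3 := Fin 3 → ℝ

noncomputable section

def gA (M : CoxeterMatrix (Fin 3)) (i j : Fin 3) : ℝ := -2 * Real.cos (Real.pi / (M i j : ℝ))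

def ee (i : Fin 3) : V3 := Pi.single i 1

def fD (M : CoxeterMatrix (Fin 3)) (i : Fin 3) : V3 →ₗ[ℝ] ℝ :=
  ∑ j, gA M i j • LinearMap.proj j

def sg (M : CoxeterMatrix (Fin 3)) (i : Fin 3) : Module.End ℝ V3 :=
  LinearMap.id - (fD M i).smulRight (ee i)

def bf (M : CoxeterMatrix (Fin 3)) (v w : V3) : ℝ := ∑ i, v i * fD M i w

variable (M : CoxeterMatrix (Fin 3))

lemma sg_apply (i : Fin 3) (v : V3) : sg M i v = v - fD M i v • ee i := rfl

lemma gA_symm (i j : Fin 3) : gA M i j = gA M j i := by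
  unfold gA; rw [M.symmetric i j]

lemma gA_diag (i : Fin 3) : gA M i i = 2 := by
  simp [gA]

lemma fD_apply (i : Fin 3) (v : V3) : fD M i v = ∑ j, gA M i j * v j := by
  simp [fD]

lemma fD_ee (i j : Fin 3) : fD M i (ee j) = gA M i j := by
  simp [fD_apply, ee, Pi.single_apply]

lemma bf_symm (v w : V3) : bf M v w = bf M w v := by
  simp only [bf, fD_apply, Fin.sum_univ_three, gA_symm M 1 0, gA_symm M 2 0, gA_symm M 2 1]
  ring

lemma bf_ee (i : Fin 3) (v : V3) : bf M (ee i) v = fD M i v := by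
  simp [bf, ee, Pi.single_apply]

lemma bf_add_right (u v w : V3) : bf M u (v + w) = bf M u v + bf M u w := by
  simp [bf, mul_add, Finset.sum_add_distrib]

lemma bf_smul_right (u v : V3) (a : ℝ) : bf M u (a • v) = a * bf M u v := by
  simp only [bf, map_smul, smul_eq_mul, Finset.mul_sum]
  exact Finset.sum_congr rfl fun _ _ => by ring

lemma bf_sub_right (u v w : V3) : bf M u (v - w) = bf M u v - bf M u w := by
  simp [bf, mul_sub, Finset.sum_sub_distrib]

lemma bf_sg (i : Fin 3) (v w : V3) : bf M (sg M i v) (sg M i w) = bf M v w := by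
  rw [sg_apply, sg_apply, bf_sub_right, bf_smul_right, bf_symm M _ w, bf_symm M _ (ee i),
    bf_sub_right, bf_sub_right, bf_smul_right, bf_smul_right, bf_symm M w (ee i), bf_ee, bf_ee,
    bf_ee, fD_ee, gA_diag, bf_symm M w v]
  ring

lemma sg_ee_self (i : Fin 3) : sg M i (ee i) = - ee i := by
  rw [sg_apply, fD_ee, gA_diag]; module

lemma sg_ee (i j : Fin 3) : sg M i (ee j) = ee j - gA M i j • ee i := by
  rw [sg_apply, fD_ee]

lemma sg_sg (i : Fin 3) : sg M i * sg M i = 1 := by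
  ext1 v
  ext1
  simp only [Module.End.mul_eq_comp, LinearMap.comp_apply, sg_apply, map_sub, map_smul, fD_ee,
    gA_diag, Module.End.one_apply]
  module

/-- The angle. -/
def th (i j : Fin 3) : ℝ := Real.pi / (M i j : ℝ)

lemma two_le {i j : Fin 3} (hM : M i j ≠ 0) (hij : i ≠ j) : 2 ≤ M i j := by
  have := M.off_diagonal i j hij
  change M i j ≠ 1 at this
  omega

lemma th_mul {i j : Fin 3} (hM : M i j ≠ 0) : (M i j : ℝ) * th M i j = Real.pi := by
  have : (M i j : ℝ) ≠ 0 := by exact_mod_cast hM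
  unfold th; field_simp

lemma sin_pos_of {i j : Fin 3} (hM : M i j ≠ 0) {n : ℕ} (h0 : 0 < n)
    (hn : n < M i j) : 0 < Real.sin (n * th M i j) := by
  have hp : (0 : ℝ) < M i j := by exact_mod_cast Nat.pos_of_ne_zero hM
  have ht : 0 < th M i j := div_pos Real.pi_pos hp
  have hn' : (n : ℝ) < M i j := by exact_mod_cast hn
  have h0' : (0 : ℝ) < n := by exact_mod_cast h0
  apply Real.sin_pos_of_pos_of_lt_pi (by positivity)
  rw [← th_mul M hM]
  exact mul_lt_mul_of_pos_right hn' ht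

lemma sin_th_pos {i j : Fin 3} (hM : M i j ≠ 0) (hij : i ≠ j) : 0 < Real.sin (th M i j) := by
  have := sin_pos_of M hM (n := 1) one_pos (two_le M hM hij)
  simpa using this

lemma sin_nonneg_of {i j : Fin 3} (hM : M i j ≠ 0) {n : ℕ} 
    (hn : n ≤ M i j) : 0 ≤ Real.sin (n * th M i j) := by
  rcases Nat.eq_zero_or_pos n with rfl | h0
  · simp
  rcases hn.eq_or_lt with rfl | h
  · rw [th_mul M hM]; simp
  · exact (sin_pos_of M hM h0 h).le

lemma sin_rec (x t : ℝ) : Real.sin (x + 2 * t) = 2 * Real.cos t * Real.sin (x + t) - Real.sin x := by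
  have h1 : x + 2 * t = (x + t) + t := by ring
  have h2 : Real.sin x = Real.sin ((x + t) - t) := by ring_nf
  rw [h1, h2, Real.sin_add (x + t) t, Real.sin_sub (x + t) t]; ring

lemma gA_th (i j : Fin 3) : gA M i j = - (2 * Real.cos (th M i j)) := by
  unfold gA th; ring

lemma alt_ee (i j : Fin 3) (n : ℕ) :
    Real.sin (th M i j) • ((alternatingWord i j n).map (sg M)).prod (ee i) =
      if Even n then Real.sin ((n + 1 : ℕ) * th M i j) • ee i + Real.sin (n * th M i j) • ee j
      else Real.sin (n * th M i j) • ee i + Real.sin ((n + 1 : ℕ) * th M i j) • ee j := by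
  induction n with
  | zero => simp [alternatingWord]
  | succ n ih =>
    rw [alternatingWord_succ', List.map_cons, List.prod_cons, Module.End.mul_apply, ← map_smul, ih]
    have hr := sin_rec (n * th M i j) (th M i j)
    have e1 : ((n + 1 : ℕ) : ℝ) * th M i j = n * th M i j + th M i j := by push_cast; ring
    have e2 : ((n + 1 + 1 : ℕ) : ℝ) * th M i j = n * th M i j + 2 * th M i j := by
      push_cast; ring
    rw [e2, e1, hr]
    by_cases h : Even n
    · have h' : ¬ Even (n + 1) := by simp [h, parity_simps]
      simp only [h, h', if_true, if_false, map_add, map_smul, sg_ee_self, sg_ee M j i,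
        gA_symm M j i, gA_th]
      module
    · have h' : Even (n + 1) := by simp [h, parity_simps]
      simp only [h, h', if_true, if_false, map_add, map_smul, sg_ee_self, sg_ee M i j, gA_th]
      module

lemma pow_ee_left (i j : Fin 3) (n : ℕ) :
    Real.sin (th M i j) • ((sg M i * sg M j) ^ n) (ee i) =
      Real.sin (2 * n * th M i j + th M i j) • ee i + Real.sin (2 * n * th M i j) • ee j := by
  induction n with
  | zero => simp
  | succ n ih =>
    rw [pow_succ', Module.End.mul_apply, ← map_smul, ih, Module.End.mul_apply]
    have hr := sin_rec (2 * n * th M i j) (th M i j)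
    have hr' := sin_rec (2 * n * th M i j + th M i j) (th M i j)
    rw [show 2 * n * th M i j + th M i j + th M i j = 2 * n * th M i j + 2 * th M i j by ring,
      hr] at hr'
    have e2 : 2 * ((n + 1 : ℕ) : ℝ) * th M i j = 2 * n * th M i j + 2 * th M i j := by
      push_cast; ring
    rw [e2, show 2 * n * th M i j + 2 * th M i j + th M i j
      = 2 * n * th M i j + th M i j + 2 * th M i j by ring, hr', hr]
    simp only [map_add, map_smul, sg_ee_self, sg_ee M j i, sg_ee M i j, map_neg, map_sub,
        gA_symm M j i, gA_th]
    module

lemma pow_p_left {i j : Fin 3} (hM : M i j ≠ 0) (hij : i ≠ j) :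
    ((sg M i * sg M j) ^ (M i j)) (ee i) = ee i := by
  have h := pow_ee_left M i j (M i j)
  rw [mul_assoc, th_mul M hM, Real.sin_two_pi, zero_smul, add_zero, add_comm,
    Real.sin_add_two_pi] at h
  exact smul_right_injective _ (sin_th_pos M hM hij).ne' h

lemma sg_pow {i j : Fin 3} (hM : M i j ≠ 0) : (sg M i * sg M j) ^ (M i j) = 1 := by
  by_cases hij : i = j
  · subst hij; simp [sg_sg]
  have h1 := pow_p_left M hM hij
  have h2 : ((sg M i * sg M j) ^ (M i j)) (ee j) = ee j := by
    have h3 := pow_p_left M (i := j) (j := i) (by rwa [M.symmetric]) (Ne.symm hij)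
    rw [M.symmetric j i] at h3
    have key : (sg M i * sg M j) ^ (M i j) * (sg M j * sg M i) ^ (M i j) = 1 := by
      have hc : (sg M i * sg M j) * (sg M j * sg M i) = 1 := by
        rw [mul_assoc, ← mul_assoc (sg M j), sg_sg, one_mul, sg_sg]
      have hc' : (sg M j * sg M i) * (sg M i * sg M j) = 1 := by
        rw [mul_assoc, ← mul_assoc (sg M i), sg_sg, one_mul, sg_sg]
      have : Commute (sg M i * sg M j) (sg M j * sg M i) := by
        rw [Commute, SemiconjBy, hc, hc']
      rw [← this.mul_pow, hc, one_pow]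
    have := congrArg (fun f => f (ee j)) key
    simp only [Module.End.mul_apply, h3, Module.End.one_apply] at this
    exact this
  have hs := sin_th_pos M hM hij
  have hd : 4 - gA M i j ^ 2 ≠ 0 := by
    rw [gA_th]
    have := Real.sin_sq_add_cos_sq (th M i j)
    nlinarith [pow_pos hs 2]
  apply LinearMap.ext
  intro v
  set a := (2 * fD M i v - gA M i j * fD M j v) / (4 - gA M i j ^ 2) with ha
  set b := (2 * fD M j v - gA M i j * fD M i v) / (4 - gA M i j ^ 2) with hb
  set u := v - a • ee i - b • ee j with hu
  have hi : fD M i u = 0 := by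
    simp only [hu, map_sub, map_smul, fD_ee, gA_diag, smul_eq_mul, ha, hb]
    field_simp; ring
  have hj : fD M j u = 0 := by
    simp only [hu, map_sub, map_smul, fD_ee, gA_diag, smul_eq_mul, ha, hb, gA_symm M j i]
    field_simp; ring
  have hE : (sg M i * sg M j) u = u := by
    rw [Module.End.mul_apply, sg_apply M j, hj, zero_smul, sub_zero, sg_apply, hi, zero_smul,
      sub_zero]
  have hEn : ∀ n : ℕ, ((sg M i * sg M j) ^ n) u = u := by
    intro n
    induction n with
    | zero => rfl
    | succ n ih => rw [pow_succ, Module.End.mul_apply, hE, ih]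
  have hv : v = u + a • ee i + b • ee j := by rw [hu]; module
  rw [Module.End.one_apply, hv]
  simp only [map_add, map_smul, h1, h2, hEn]

variable {M} {W : Type*} [Group W] (cs : CoxeterSystem M W)

def rho (hM : ∀ i j, M i j ≠ 0) : W →* Module.End ℝ V3 :=
  cs.lift ⟨sg M, fun i j => sg_pow M (hM i j)⟩

variable (hM : ∀ i j, M i j ≠ 0)

lemma rho_simple (i : Fin 3) : rho cs hM (cs.simple i) = sg M i := 
  cs.lift_apply_simple _ i

lemma rho_word (ω : List (Fin 3)) : rho cs hM (cs.wordProd ω) = (ω.map (sg M)).prod := by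
  induction ω with
  | nil => simp
  | cons a l ih => rw [cs.wordProd_cons, map_mul, ih, rho_simple]; simp

lemma rho_inj (x : W) {u v : V3} (h : rho cs hM x u = rho cs hM x v) : u = v := by
  have := congrArg (rho cs hM x⁻¹) h
  rwa [← Module.End.mul_apply, ← Module.End.mul_apply, ← map_mul, inv_mul_cancel, map_one] at this

lemma bf_rho (x : W) (v w : V3) : bf M (rho cs hM x v) (rho cs hM x w) = bf M v w := by
  induction x using cs.simple_induction_left with
  | one => simp
  | mul_simple_left x i ih => rw [map_mul, rho_simple, Module.End.mul_apply, Module.End.mul_apply, bf_sg, ih]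

lemma coset (hM : ∀ i j, M i j ≠ 0) (i j : Fin 3) (N : ℕ) : ∀ x : W, cs.length x = N →
    ∃ (y : W) (n : ℕ) (a b : Fin 3),
    ((a = i ∧ b = j) ∨ (a = j ∧ b = i)) ∧ x = y * cs.wordProd (alternatingWord a b n) ∧
    cs.length x = cs.length y + n ∧ n ≤ M i j ∧
    ¬ cs.IsRightDescent y i ∧ ¬ cs.IsRightDescent y j := by
  induction N with
  | zero =>
    intro x hx
    rw [cs.length_eq_zero_iff] at hx
    subst hx
    exact ⟨1, 0, i, j, Or.inl ⟨rfl, rfl⟩, by simp [alternatingWord], by simp, by simp,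
      cs.not_isRightDescent_one i, cs.not_isRightDescent_one j⟩
  | succ N ih =>
    intro x hx
    by_cases hd : cs.IsRightDescent x i ∨ cs.IsRightDescent x j
    · obtain ⟨c, d, hcd, hc⟩ : ∃ c d, ((d = i ∧ c = j) ∨ (d = j ∧ c = i)) ∧
          cs.IsRightDescent x c := by
        rcases hd with h | h
        · exact ⟨i, j, Or.inr ⟨rfl, rfl⟩, h⟩
        · exact ⟨j, i, Or.inl ⟨rfl, rfl⟩, h⟩
      have hl := cs.isRightDescent_iff.1 hc
      obtain ⟨y, n, a, b, hab, hxy, hlen, hn, hyi, hyj⟩ := ih (x * cs.simple c) (by omega)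
      have hx' : x = (y * cs.wordProd (alternatingWord a b n)) * cs.simple c := by
        rw [← hxy]; simp
      have hMab : M d c = M i j := by
        rcases hcd with ⟨rfl, rfl⟩ | ⟨rfl, rfl⟩
        · rfl
        · exact M.symmetric _ _
      have key : (n = 0 ∨ b = d) → x = y * cs.wordProd (alternatingWord d c (n + 1)) := by
        intro h
        rw [alternatingWord_succ, cs.wordProd_concat, ← mul_assoc]
        rcases h with rfl | rfl
        · simpa [alternatingWord] using hx'
        · have : a = c := by
            rcases hab with ⟨rfl, rfl⟩ | ⟨rfl, rfl⟩ <;> rcases hcd with ⟨h1, h2⟩ | ⟨h1, h2⟩ <;>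
              simp_all
          rw [this] at hx'
          exact hx'
      have key2 : n = 0 ∨ b = d := by
        by_contra hcon
        push Not at hcon
        obtain ⟨n', rfl⟩ := Nat.exists_eq_succ_of_ne_zero hcon.1
        have hbc : b = c := by
          rcases hab with ⟨rfl, rfl⟩ | ⟨rfl, rfl⟩ <;> rcases hcd with ⟨h1, h2⟩ | ⟨h1, h2⟩ <;>
              simp_all
        rw [alternatingWord_succ, cs.wordProd_concat, hbc] at hx'
        have h3 : x = y * cs.wordProd (alternatingWord c a n') := by
          rw [hx']; simp [mul_assoc]
        have h4 := cs.length_mul_le y (cs.wordProd (alternatingWord c a n'))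
        have h5 := cs.length_wordProd_le (alternatingWord c a n')
        rw [length_alternatingWord] at h5
        rw [← h3] at h4
        omega
      have hx2 := key key2
      refine ⟨y, n + 1, d, c, hcd, hx2, by omega, ?_, hyi, hyj⟩
      by_contra hcon
      have hnM : n = M i j := by omega
      have hM0 := hM i j
      rw [cs.prod_alternatingWord_eq_prod_alternatingWord_sub _ _ _ (by omega)] at hx2
      have h4 := cs.length_mul_le y (cs.wordProd (alternatingWord c d (M d c * 2 - (n + 1))))
      have h5 := cs.length_wordProd_le (alternatingWord c d (M d c * 2 - (n + 1)))
      rw [length_alternatingWord] at h5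
      rw [← hx2] at h4
      omega
    · push Not at hd
      exact ⟨x, 0, i, j, Or.inl ⟨rfl, rfl⟩, by simp [alternatingWord], by simp, by simp,
        hd.1, hd.2⟩

lemma coset' (hM : ∀ i j, M i j ≠ 0) {i j : Fin 3} (x : W)
    (hi : ¬ cs.IsRightDescent x i) (hj : cs.IsRightDescent x j) :
    ∃ (y : W) (n : ℕ), 0 < n ∧ n < M i j ∧ x = y * cs.wordProd (alternatingWord i j n) ∧
    cs.length x = cs.length y + n ∧
    ¬ cs.IsRightDescent y i ∧ ¬ cs.IsRightDescent y j := by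
  obtain ⟨y, n, a, b, hab, hxy, hlen, hn, hyi, hyj⟩ := coset cs hM i j _ x rfl
  have hn0 : n ≠ 0 := by
    rintro rfl
    simp only [alternatingWord, cs.wordProd_nil, mul_one] at hxy
    exact hyj (hxy ▸ hj)
  have aux : ∀ c, x ≠ y * cs.wordProd (alternatingWord c i n) := by
    intro c h
    obtain ⟨n', rfl⟩ := Nat.exists_eq_succ_of_ne_zero hn0
    rw [alternatingWord_succ, cs.wordProd_concat] at h
    apply hi
    have h3 : x * cs.simple i = y * cs.wordProd (alternatingWord i c n') := by
      rw [h]; simp [mul_assoc]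
    have h4 := cs.length_mul_le y (cs.wordProd (alternatingWord i c n'))
    have h5 := cs.length_wordProd_le (alternatingWord i c n')
    rw [length_alternatingWord] at h5
    rw [← h3] at h4
    unfold CoxeterSystem.IsRightDescent
    omega
  rcases hab with ⟨rfl, rfl⟩ | ⟨rfl, rfl⟩
  · refine ⟨y, n, by omega, lt_of_le_of_ne hn ?_, hxy, hlen, hyi, hyj⟩
    intro h
    apply aux b
    rw [hxy, h]
    have := cs.wordProd_braidWord_eq a b
    unfold CoxeterSystem.braidWord at this
    rw [this, M.symmetric b a]
  · exact absurd hxy (aux _)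

lemma rho_alt {i j : Fin 3} (hij : i ≠ j) (y : W) (n : ℕ) (hn : n < M i j) :
    ∃ p q : ℝ, 0 ≤ p ∧ 0 ≤ q ∧ (0 < n → n + 1 < M i j → 0 < p ∧ 0 < q) ∧
      rho cs hM (y * cs.wordProd (alternatingWord i j n)) (ee i) =
        p • rho cs hM y (ee i) + q • rho cs hM y (ee j) := by
  have hs := sin_th_pos M (hM i j) hij
  have h := alt_ee M i j n
  rw [← rho_word cs hM] at h
  have h1 := sin_nonneg_of M (hM i j) (n := n) hn.le
  have h2 := sin_nonneg_of M (hM i j) (n := n + 1) hn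
  have h3 : ∀ p q : ℝ, Real.sin (th M i j) •
      rho cs hM (cs.wordProd (alternatingWord i j n)) (ee i) = p • ee i + q • ee j →
      rho cs hM (y * cs.wordProd (alternatingWord i j n)) (ee i) =
      ((Real.sin (th M i j))⁻¹ * p) • rho cs hM y (ee i) +
      ((Real.sin (th M i j))⁻¹ * q) • rho cs hM y (ee j) := by
    intro p q hpq
    have h4 : rho cs hM (cs.wordProd (alternatingWord i j n)) (ee i) =
        (Real.sin (th M i j))⁻¹ • (p • ee i + q • ee j) := by
      rw [← hpq, smul_smul, inv_mul_cancel₀ hs.ne', one_smul]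
    rw [map_mul, Module.End.mul_apply, h4]
    simp only [map_add, map_smul]
    module
  have h5 : 0 < n → n + 1 < M i j → 0 < Real.sin (n * th M i j) ∧
      0 < Real.sin ((n + 1 : ℕ) * th M i j) := fun a b =>
    ⟨sin_pos_of M (hM i j) a hn, sin_pos_of M (hM i j) (by omega) b⟩
  split_ifs at h with hev
  · refine ⟨_, _, by positivity, by positivity, ?_, h3 _ _ h⟩
    intro a b
    obtain ⟨h6, h7⟩ := h5 a b
    exact ⟨by positivity, by positivity⟩
  · refine ⟨_, _, by positivity, by positivity, ?_, h3 _ _ h⟩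
    intro a b
    obtain ⟨h6, h7⟩ := h5 a b
    exact ⟨by positivity, by positivity⟩

lemma ee_nonneg (i : Fin 3) : 0 ≤ ee i := by
  unfold ee; simp

lemma ee_ne_zero (i : Fin 3) : ee i ≠ 0 := by
  unfold ee; simp

lemma pos_of (N : ℕ) : ∀ x : W, cs.length x = N → ∀ i, ¬ cs.IsRightDescent x i →
    0 ≤ rho cs hM x (ee i) := by
  induction N using Nat.strong_induction_on with
  | _ N ih =>
    intro x hx i hi
    by_cases h1 : x = 1
    · subst h1; simpa using ee_nonneg i
    obtain ⟨j, hj⟩ := cs.exists_rightDescent_of_ne_one h1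
    have hij : i ≠ j := by rintro rfl; exact hi hj
    obtain ⟨y, n, hn0, hn, hxy, hl, hyi, hyj⟩ := coset' cs hM x hi hj
    obtain ⟨p, q, hp, hq, -, h⟩ := rho_alt cs hM hij y n hn
    rw [hxy, h]
    have a1 := ih (cs.length y) (by omega) y rfl i hyi
    have a2 := ih (cs.length y) (by omega) y rfl j hyj
    exact add_nonneg (smul_nonneg hp a1) (smul_nonneg hq a2)

lemma not_desc {x : W} {i : Fin 3} {z : Fin 3} (h : rho cs hM x (ee i) = ee z) :
    ¬ cs.IsRightDescent x i := by
  intro hd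
  have h1 := cs.isRightDescent_iff_not_isRightDescent_mul.1 hd
  have h2 := pos_of cs hM _ _ rfl i h1
  rw [map_mul, Module.End.mul_apply, rho_simple, sg_ee_self, map_neg, h] at h2
  have h3 := h2 z
  simp [ee] at h3
  linarith

lemma pow_half {i j : Fin 3} (hij : i ≠ j) {K : ℕ} (hK : M i j = 2 * K + 1) :
    rho cs hM ((cs.simple i * cs.simple j) ^ K) (ee i) = ee j := by
  have hs := sin_th_pos M (hM i j) hij
  have h := pow_ee_left M i j K
  have ht := th_mul M (hM i j)
  rw [hK] at ht
  push_cast at ht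
  rw [show 2 * (K : ℝ) * th M i j + th M i j = Real.pi by linarith,
    show 2 * (K : ℝ) * th M i j = Real.pi - th M i j by linarith, Real.sin_pi_sub, Real.sin_pi,
    zero_smul, zero_add] at h
  rw [map_pow, map_mul, rho_simple, rho_simple]
  exact smul_right_injective _ hs.ne' h

lemma eq_smul_of {u v : V3} {p q : ℝ} {z : Fin 3} (hu : 0 ≤ u) (hv : 0 ≤ v) (hp : 0 < p)
    (hq : 0 < q) (h : p • u + q • v = ee z) : u = u z • ee z := by
  ext k
  by_cases hk : k = z
  · subst hk; simp [ee]
  · have h1 := congrFun h k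
    simp [ee, hk] at h1
    have h2 := hu k
    have h3 := hv k
    simp only [Pi.zero_apply] at h2 h3
    have h4 : u k = 0 := by
      have : 0 ≤ q * v k := by positivity
      have : 0 ≤ p * u k := by positivity
      have h5 : p * u k = 0 := by linarith
      rcases mul_eq_zero.1 h5 with h | h
      · exact absurd h hp.ne'
      · exact h
    simp [h4, ee, hk]

lemma step (hodd : ∀ i j, i ≠ j → Odd (M i j)) {x : W} {i z : Fin 3}
    (h : rho cs hM x (ee i) = ee z) (hx : x ≠ 1) :
    ∃ (j : Fin 3) (y : W), i ≠ j ∧ cs.length y < cs.length x ∧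
      x = y * (cs.simple i * cs.simple j) ^ (M i j / 2) ∧ rho cs hM y (ee j) = ee z := by
  have hi := not_desc cs hM h
  obtain ⟨j, hj⟩ := cs.exists_rightDescent_of_ne_one hx
  have hij : i ≠ j := by rintro rfl; exact hi hj
  obtain ⟨y, n, hn0, hn, hxy, hl, hyi, hyj⟩ := coset' cs hM x hi hj
  obtain ⟨p, q, hp, hq, hpq, h'⟩ := rho_alt cs hM hij y n hn
  have a1 := pos_of cs hM _ y rfl i hyi
  have a2 := pos_of cs hM _ y rfl j hyj
  obtain ⟨K, hK⟩ := hodd i j hij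
  have hn1 : n + 1 = M i j := by
    by_contra hcon
    obtain ⟨hp', hq'⟩ := hpq hn0 (by omega)
    rw [← hxy, h] at h'
    have b1 := eq_smul_of a1 a2 hp' hq' h'.symm
    have b2 := eq_smul_of a2 a1 hq' hp' (by rw [add_comm]; exact h'.symm)
    set c := rho cs hM y (ee i) z
    set d := rho cs hM y (ee j) z
    have h3 : rho cs hM y (d • ee i - c • ee j) = rho cs hM y 0 := by
      rw [map_sub, map_smul, map_smul, b1, b2]
      simp only [map_zero]
      module
    have h4 := rho_inj cs hM y h3
    have h5 := congrFun h4 i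
    have hd : d = 0 := by simpa [ee, hij] using h5
    rw [hd, zero_smul] at b2
    exact ee_ne_zero j (rho_inj cs hM y (by rw [b2, map_zero]))
  have hn2 : n = 2 * K := by omega
  have hxK : x = y * (cs.simple i * cs.simple j) ^ K := by
    rw [hxy, cs.prod_alternatingWord_eq_mul_pow, hn2]
    simp
  refine ⟨j, y, hij, by omega, ?_, ?_⟩
  · rw [hxK, hK]
    congr 2
    omega
  · rw [hxK, map_mul, Module.End.mul_apply, pow_half cs hM hij hK] at h
    exact h

lemma gA_le {i j : Fin 3} (h3 : 3 ≤ M i j) : gA M i j ≤ -1 := by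
  have h3' : (3 : ℝ) ≤ M i j := by exact_mod_cast h3
  have : Real.cos (Real.pi / 3) ≤ Real.cos (Real.pi / M i j) := by
    apply Real.cos_le_cos_of_nonneg_of_le_pi
    · positivity
    · linarith [Real.pi_pos]
    · exact div_le_div_of_nonneg_left Real.pi_pos.le (by norm_num) h3'
  rw [Real.cos_pi_div_three] at this
  unfold gA
  linarith

lemma gA_gt {i j : Fin 3} (hM : M i j ≠ 0) (hij : i ≠ j) : -2 < gA M i j := by
  have hs := sin_th_pos M hM hij
  rw [gA_th]
  have := Real.sin_sq_add_cos_sq (th M i j)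
  nlinarith [pow_pos hs 2]

lemma sg_coord {i t : Fin 3} (h : t ≠ i) (v : V3) : sg M i v t = v t := by
  simp [sg_apply, ee, h]

lemma pow_coord {i j t : Fin 3} (hi : t ≠ i) (hj : t ≠ j) (n : ℕ) (v : V3) :
    ((sg M i * sg M j) ^ n) v t = v t := by
  induction n with
  | zero => rfl
  | succ n ih => rw [pow_succ', Module.End.mul_apply, Module.End.mul_apply, sg_coord hi,
      sg_coord hj, ih]

lemma v_ej {i j : Fin 3} (hij : i ≠ j) {K : ℕ} (hK : M i j = 2 * K + 1) (h3 : 3 ≤ M i j) :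
    rho cs hM ((cs.simple i * cs.simple j) ^ K) (ee j) = gA M i j • ee j - ee i := by
  set v := (cs.simple i * cs.simple j) ^ K with hv
  have hvi : rho cs hM v (ee i) = ee j := pow_half cs hM hij hK
  have hc : (cs.simple i * cs.simple j) * v = v * (cs.simple i * cs.simple j) := by
    rw [hv, ← pow_succ, ← pow_succ']
  have h := congrArg (fun x => rho cs hM x (ee i)) hc
  simp only [map_mul, Module.End.mul_apply, rho_simple, hvi, sg_ee_self, sg_ee M i j, sg_ee M j i,
    gA_symm M j i, map_sub, map_neg, map_smul] at h
  have hg : gA M i j ≠ 0 := by linarith [gA_le (M := M) h3]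
  apply smul_right_injective _ hg
  change gA M i j • _ = gA M i j • _
  rw [← sub_eq_zero] at h ⊢
  rw [← h]
  module

lemma v_et {i j t : Fin 3} (hij : i ≠ j) (hti : t ≠ i) (htj : t ≠ j) {K : ℕ}
    (hK : M i j = 2 * K + 1) (h3 : ∀ i j, i ≠ j → 3 ≤ M i j) :
    ∃ A B : ℝ, 2 ≤ B ∧
    rho cs hM ((cs.simple i * cs.simple j) ^ K) (ee t) = ee t + A • ee j + B • ee i := by
  set v := (cs.simple i * cs.simple j) ^ K with hv
  have hvi : rho cs hM v (ee i) = ee j := pow_half cs hM hij hK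
  have hvj : rho cs hM v (ee j) = gA M i j • ee j - ee i := v_ej cs hM hij hK (h3 i j hij)
  have hdec : ∀ u : V3, u = u t • ee t + u j • ee j + u i • ee i := by
    intro u
    ext k
    have : k = t ∨ k = j ∨ k = i := by omega
    rcases this with rfl | rfl | rfl
    · simp [ee, hti, htj]
    · simp [ee, hij.symm, htj.symm]
    · simp [ee, hij, hti.symm]
  have ht : rho cs hM v (ee t) t = 1 := by
    rw [hv, map_pow, map_mul, rho_simple, rho_simple, pow_coord hti htj]
    simp [ee]
  set u := rho cs hM v (ee t) with hu
  have hd := hdec u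
  rw [ht, one_smul] at hd
  refine ⟨u j, u i, ?_, hd⟩
  set A := u j
  set B := u i
  have e1 : bf M (ee j) u = gA M t i := by
    rw [hu, ← hvi, bf_rho, bf_ee, fD_ee, gA_symm]
  have e2 : bf M u (gA M i j • ee j - ee i) = gA M t j := by
    rw [hu, ← hvj, bf_rho, bf_ee, fD_ee]
  rw [bf_sub_right, bf_smul_right, bf_symm M u, bf_symm M u, e1, bf_ee] at e2
  rw [bf_ee] at e1
  rw [hd] at e1 e2
  simp only [map_add, map_smul, fD_ee, gA_diag, smul_eq_mul, gA_symm M j i, gA_symm M j t,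
    gA_symm M i t] at e1 e2
  have g1 := gA_le (M := M) (h3 i j hij)
  have g2 := gA_gt (hM i j) hij
  have g3 := gA_le (M := M) (h3 t i hti)
  have g4 := gA_le (M := M) (h3 t j htj)
  generalize gA M i j = g at *
  generalize gA M t i = P at *
  generalize gA M t j = Q at *
  have key : (2 - g) * ((2 + g) * B + (P + Q)) = 0 := by linear_combination (-2) * e2 - g * e1
  have key2 : (2 + g) * B = - (P + Q) := by
    rcases mul_eq_zero.1 key with h | h <;> linarith
  by_contra hB
  push Not at hB
  nlinarith

def phi (v : V3) : ℝ := v 1 + v 2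

def St (y : W) (j i t : Fin 3) (r : ℝ) : Prop :=
  rho cs hM y (ee j) = ee 0 ∧ r ≤ phi (rho cs hM y (ee i)) ∧
    1 ≤ phi (rho cs hM y (ee i)) + phi (rho cs hM y (ee t))

lemma St_step {y : W} {j i t : Fin 3} {r : ℝ} (hr : 0 ≤ r) (h : St cs hM y j i t r)
    (hij : i ≠ j) (hti : t ≠ i) (htj : t ≠ j) {K : ℕ}
    (hK : M i j = 2 * K + 1) (h3 : ∀ i j, i ≠ j → 3 ≤ M i j) :
    St cs hM (y * (cs.simple i * cs.simple j) ^ K) i t j (r + 1) := by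
  obtain ⟨h1, h2, h4⟩ := h
  obtain ⟨A, B, hB, ht⟩ := v_et cs hM hij hti htj hK h3
  have hvi := pow_half cs hM hij hK
  have hvj := v_ej cs hM hij hK (h3 i j hij)
  have pe0 : ∀ c : ℝ, ∀ w : V3, phi (c • ee 0 - w) = - phi w := by
    intro c w; simp [phi, ee]; ring
  have pe1 : ∀ c d : ℝ, ∀ w w' : V3, phi (w' + c • ee 0 + d • w) = phi w' + d * phi w := by
    intro c d w w'; simp [phi, ee]; ring
  unfold St
  simp only [map_mul, Module.End.mul_apply] at *
  rw [hvi, hvj, ht]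
  simp only [map_add, map_sub, map_smul, h1, pe0, pe1]
  refine ⟨trivial, ?_, ?_⟩ <;> nlinarith

variable {k l m : ℕ}

def ww (k l m : ℕ) : W := (cs.simple 2 * cs.simple 0) ^ m * (cs.simple 1 * cs.simple 2) ^ l *
  (cs.simple 0 * cs.simple 1) ^ k

lemma St_ww (h01 : M 0 1 = 2 * k + 1) (h12 : M 1 2 = 2 * l + 1) (h20 : M 2 0 = 2 * m + 1)
    (h3 : ∀ i j, i ≠ j → 3 ≤ M i j) (n : ℕ) :
    St cs hM (ww cs k l m ^ n) 0 2 1 n := by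
  induction n with
  | zero => refine ⟨by simp, by simp [phi, ee], by simp [phi, ee]⟩
  | succ n ih =>
    have hn : (0 : ℝ) ≤ n := by positivity
    have a1 := St_step cs hM hn ih (by decide) (by decide) (by decide) h20 h3
    have a2 := St_step cs hM (by positivity) a1 (by decide) (by decide) (by decide) h12 h3
    have a3 := St_step cs hM (by positivity) a2 (by decide) (by decide) (by decide) h01 h3
    rw [pow_succ]
    unfold ww at *
    simp only [← mul_assoc] at *
    refine ⟨a3.1, le_trans ?_ a3.2.1, a3.2.2⟩
    push_cast; linarith

lemma ww_inf (hM : ∀ i j, M i j ≠ 0) (h01 : M 0 1 = 2 * k + 1) (h12 : M 1 2 = 2 * l + 1) (h20 : M 2 0 = 2 * m + 1)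
    (h3 : ∀ i j, i ≠ j → 3 ≤ M i j) : ¬ IsOfFinOrder (ww cs k l m) := by
  intro h
  obtain ⟨n, hn, h1⟩ := isOfFinOrder_iff_pow_eq_one.1 h
  have h2 := St_ww cs hM h01 h12 h20 h3 (n + n)
  rw [pow_add, h1] at h2
  have h4 := h2.2.1
  simp [phi, ee] at h4
  have : (1 : ℝ) ≤ n := by exact_mod_cast hn
  linarith

lemma ww_fix (h01 : M 0 1 = 2 * k + 1) (h12 : M 1 2 = 2 * l + 1) (h20 : M 2 0 = 2 * m + 1)
    (h3 : ∀ i j, i ≠ j → 3 ≤ M i j) : rho cs hM (ww cs k l m) (ee 0) = ee 0 := by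
  have := (St_ww cs hM h01 h12 h20 h3 1).1
  rwa [pow_one] at this

def hh (k l : ℕ) : Fin 3 → W := ![1, (cs.simple 0 * cs.simple 1) ^ k,
  (cs.simple 1 * cs.simple 2) ^ l * (cs.simple 0 * cs.simple 1) ^ k]

lemma inv_pow_simple (i j : Fin 3) (n : ℕ) :
    (cs.simple j * cs.simple i) ^ n = ((cs.simple i * cs.simple j) ^ n)⁻¹ := by
  rw [← inv_pow, mul_inv_rev, cs.inv_simple, cs.inv_simple]

lemma hh_step (h01 : M 0 1 = 2 * k + 1) (h12 : M 1 2 = 2 * l + 1) (h20 : M 2 0 = 2 * m + 1)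
    (i j : Fin 3) (hij : i ≠ j) :
    (hh cs k l j)⁻¹ * (cs.simple i * cs.simple j) ^ (M i j / 2) * hh cs k l i ∈
      Subgroup.zpowers (ww cs k l m) := by
  have h10 : M 1 0 = 2 * k + 1 := by rw [M.symmetric, h01]
  have h21 : M 2 1 = 2 * l + 1 := by rw [M.symmetric, h12]
  have h02 : M 0 2 = 2 * m + 1 := by rw [M.symmetric, h20]
  have hd : ∀ n : ℕ, (2 * n + 1) / 2 = n := fun n => by omega
  fin_cases i <;> fin_cases j <;> simp at hij <;>
    simp only [hh, Fin.zero_eta, Fin.mk_one, Fin.reduceFinMk, Matrix.cons_val, h01, h12, h20, h10,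
      h21, h02, hd]
  · simp
  · rw [inv_pow_simple cs 2 0]
    have : ww cs k l m ∈ Subgroup.zpowers (ww cs k l m) := Subgroup.mem_zpowers _
    have := Subgroup.inv_mem _ this
    unfold ww at *
    convert this using 1
    group
  · rw [inv_pow_simple cs 0 1]
    simp
  · simp
  · have : ww cs k l m ∈ Subgroup.zpowers (ww cs k l m) := Subgroup.mem_zpowers _
    unfold ww at *
    simpa [mul_assoc] using this
  · rw [inv_pow_simple cs 1 2]
    simp [mul_assoc]

lemma stab (h01 : M 0 1 = 2 * k + 1) (h12 : M 1 2 = 2 * l + 1) (h20 : M 2 0 = 2 * m + 1)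
    (hodd : ∀ i j, i ≠ j → Odd (M i j)) (N : ℕ) : ∀ (x : W) (i : Fin 3), cs.length x = N →
    rho cs hM x (ee i) = ee 0 → x * hh cs k l i ∈ Subgroup.zpowers (ww cs k l m) := by
  induction N using Nat.strong_induction_on with
  | _ N ih =>
    intro x i hN h
    by_cases hx : x = 1
    · subst hx
      have hi : i = 0 := by
        by_contra hi
        have := congrFun h 0
        simp [ee, Ne.symm hi] at this
      subst hi
      simp [hh]
    obtain ⟨j, y, hij, hl, hxy, hy⟩ := step cs hM hodd h hx
    have a1 := ih _ (hN ▸ hl) y j rfl hy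
    have a2 := hh_step cs h01 h12 h20 i j hij
    have a3 := Subgroup.mul_mem _ a1 a2
    have e : x * hh cs k l i = y * hh cs k l j *
        ((hh cs k l j)⁻¹ * (cs.simple i * cs.simple j) ^ (M i j / 2) * hh cs k l i) := by
      conv_lhs => rw [hxy]
      group
    rw [e]; exact a3

lemma conj_half {G : Type*} [Group G] {a b : G} (ha : a * a = 1) (hb : b * b = 1) {n : ℕ}
    (h : (a * b) ^ (2 * n + 1) = 1) : (a * b) ^ n * a = b * (a * b) ^ n := by
  have ha' : a⁻¹ = a := inv_eq_of_mul_eq_one_left ha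
  have hb' : b⁻¹ = b := inv_eq_of_mul_eq_one_left hb
  have h1 : (a * b) ^ n * a = a * (b * a) ^ n := by
    induction n with
    | zero => simp
    | succ n ih => clear ih h; induction n with
      | zero => simp [mul_assoc]
      | succ n ih => rw [pow_succ', mul_assoc, ih, pow_succ' (b * a) (n + 1)]; simp only [mul_assoc]
  have h2 : (b * a) ^ n = (a * b) ^ (n + 1) := by
    rw [show b * a = (a * b)⁻¹ by rw [mul_inv_rev, ha', hb'], inv_pow, inv_eq_iff_mul_eq_one,
      ← pow_add, ← h]
    congr 1; omega
  rw [h1, h2, pow_succ', ← mul_assoc, ← mul_assoc, ha, one_mul]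

lemma conj_simple (i j : Fin 3) {n : ℕ} (h : M i j = 2 * n + 1) :
    (cs.simple i * cs.simple j) ^ n * cs.simple i =
      cs.simple j * (cs.simple i * cs.simple j) ^ n :=
  conj_half (cs.simple_mul_simple_self i) (cs.simple_mul_simple_self j)
    (by rw [← h]; exact cs.simple_mul_simple_pow i j)

lemma comm_ww (h01 : M 0 1 = 2 * k + 1) (h12 : M 1 2 = 2 * l + 1) (h20 : M 2 0 = 2 * m + 1) :
    Commute (cs.simple 0) (ww cs k l m) := by
  have a1 := conj_simple cs 0 1 h01
  have a2 := conj_simple cs 1 2 h12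
  have a3 := conj_simple cs 2 0 h20
  symm
  unfold Commute SemiconjBy ww
  rw [mul_assoc, a1, ← mul_assoc, mul_assoc _ _ (cs.simple 1), a2, ← mul_assoc, a3]
  simp only [mul_assoc]

lemma cent_cases {x : W} (hx : Commute (cs.simple 0) x) :
    rho cs hM x (ee 0) = ee 0 ∨ rho cs hM x (ee 0) = - ee 0 := by
  have h := congrArg (fun y => rho cs hM y (ee 0)) hx.eq
  simp only [map_mul, Module.End.mul_apply, rho_simple, sg_ee_self, map_neg] at h
  have hn := bf_rho cs hM x (ee 0) (ee 0)
  set u := rho cs hM x (ee 0)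
  rw [sg_apply] at h
  set c := fD M 0 u
  have h1 : u = (c / 2) • ee 0 := by
    ext t
    have := congrFun h t
    simp only [Pi.sub_apply, Pi.smul_apply, Pi.neg_apply, smul_eq_mul] at this ⊢
    linarith
  rw [h1, bf_smul_right, bf_symm, bf_smul_right, bf_ee, fD_ee, gA_diag] at hn
  have h2 : (c / 2 - 1) * (c / 2 + 1) = 0 := by linarith
  rcases mul_eq_zero.1 h2 with h3 | h3
  · left; rw [h1, show c / 2 = 1 by linarith, one_smul]
  · right; rw [h1, show c / 2 = -1 by linarith]; module

lemma cent_form (hM : ∀ i j, M i j ≠ 0) (h01 : M 0 1 = 2 * k + 1) (h12 : M 1 2 = 2 * l + 1) (h20 : M 2 0 = 2 * m + 1)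
    (hodd : ∀ i j, i ≠ j → Odd (M i j)) {x : W} (hx : Commute (cs.simple 0) x) :
    ∃ n : ℤ, x = ww cs k l m ^ n ∨ x = ww cs k l m ^ n * cs.simple 0 := by
  rcases cent_cases cs hM hx with h | h
  · obtain ⟨n, hn⟩ := stab cs hM h01 h12 h20 hodd _ x 0 rfl h
    exact ⟨n, Or.inl (by simpa [hh] using hn.symm)⟩
  · have h' : rho cs hM (x * cs.simple 0) (ee 0) = ee 0 := by
      rw [map_mul, Module.End.mul_apply, rho_simple, sg_ee_self, map_neg, h, neg_neg]
    obtain ⟨n, hn⟩ := stab cs hM h01 h12 h20 hodd _ _ 0 rfl h'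
    refine ⟨n, Or.inr ?_⟩
    change _ ^ n = _ at hn
    rw [hn]; simp [hh]

lemma iso_of {G : Type*} [Group G] (C : Subgroup G) {a w : G} (ha : a ∈ C) (hw : w ∈ C)
    (hC : ∀ x ∈ C, ∃ n : ℤ, x = w ^ n ∨ x = w ^ n * a) (ha2 : a * a = 1) (ha1 : a ≠ 1)
    (hc : Commute a w) (hinf : ¬ IsOfFinOrder w) :
    Nonempty (C ≃* Multiplicative (ZMod 2 × ℤ)) := by
  let f0 : ZMod 2 →+ Additive C := ZMod.lift 2 ⟨zmultiplesHom (Additive C)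
    (Additive.ofMul ⟨a, ha⟩), by
      rw [zmultiplesHom_apply]
      rw [← ofMul_zpow]
      apply Additive.toMul.injective
      apply Subtype.ext
      simp [zpow_ofNat, pow_two, ha2]⟩
  let f : Multiplicative (ZMod 2) →* C := AddMonoidHom.toMultiplicativeLeft f0
  let g : Multiplicative ℤ →* C := zpowersHom C ⟨w, hw⟩
  have hg : ∀ n : ℤ, ((g (Multiplicative.ofAdd n) : C) : G) = w ^ n := by
    intro n; simp [g, zpowersHom_apply]
  have hf0 : f (Multiplicative.ofAdd 0) = 1 := map_one f
  have hf1 : ((f (Multiplicative.ofAdd 1) : C) : G) = a := by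
    have : f0 ((1 : ℤ) : ZMod 2) = Additive.ofMul ⟨a, ha⟩ := by
      simp only [f0]
      rw [ZMod.lift_coe]
      simp
    simp only [Int.cast_one] at this
    change ((Additive.toMul (f0 1) : C) : G) = a
    rw [this]
    rfl
  have hz : ∀ z : ZMod 2, z = 0 ∨ z = 1 := by decide
  have hcomm : ∀ x y, Commute (f x) (g y) := by
    intro x y
    apply Subtype.ext
    rw [Subgroup.coe_mul, Subgroup.coe_mul]
    have hy := hg y.toAdd
    rw [ofAdd_toAdd] at hy
    rw [hy]
    rcases hz x.toAdd with h | h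
    · have : x = Multiplicative.ofAdd 0 := h
      rw [this, hf0]; simp
    · have : x = Multiplicative.ofAdd 1 := h
      rw [this, hf1]
      exact (hc.zpow_right _).eq
  let F := MonoidHom.noncommCoprod f g hcomm
  have hF : ∀ x y, F (x, y) = f x * g y := fun x y => rfl
  have hne : ∀ n : ℤ, a ≠ w ^ n := by
    intro n h
    by_cases hn : n = 0
    · subst hn; exact ha1 (by simpa using h)
    · apply hinf
      rw [isOfFinOrder_iff_zpow_eq_one]
      refine ⟨n + n, by omega, ?_⟩
      rw [zpow_add, ← h, ha2]
  have hbij : Function.Bijective F := by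
    constructor
    · rw [injective_iff_map_eq_one]
      rintro ⟨x, y⟩ h
      rw [hF] at h
      have h' := congrArg (Subtype.val) h
      rw [Subgroup.coe_mul, Subgroup.coe_one] at h'
      have hy := hg y.toAdd
      rw [ofAdd_toAdd] at hy
      rw [hy] at h'
      rcases hz x.toAdd with hx | hx
      · have hx' : x = Multiplicative.ofAdd 0 := hx
        rw [hx', hf0, Subgroup.coe_one, one_mul] at h'
        have : y.toAdd = 0 := by
          by_contra hn
          exact hinf (isOfFinOrder_iff_zpow_eq_one.2 ⟨_, hn, h'⟩)
        have hy' : y = Multiplicative.ofAdd 0 := this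
        rw [hx', hy']
        rfl
      · have hx' : x = Multiplicative.ofAdd 1 := hx
        rw [hx', hf1] at h'
        exact absurd (by rw [zpow_neg]; exact eq_inv_of_mul_eq_one_left h') (hne (-y.toAdd))
    · rintro ⟨x, hx⟩
      obtain ⟨n, h | h⟩ := hC x hx
      · refine ⟨(Multiplicative.ofAdd 0, Multiplicative.ofAdd n), ?_⟩
        apply Subtype.ext
        rw [hF, hf0, one_mul, hg]
        exact h.symm
      · refine ⟨(Multiplicative.ofAdd 1, Multiplicative.ofAdd n), ?_⟩
        apply Subtype.ext
        rw [hF, Subgroup.coe_mul, hf1, hg]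
        exact (hc.zpow_right _).eq.trans h.symm
  exact ⟨((MulEquiv.prodMultiplicative (ZMod 2) ℤ).trans (MulEquiv.ofBijective F hbij)).symm⟩

lemma main_cs (hk : 1 ≤ k) (hl : 1 ≤ l) (hm : 1 ≤ m)
    (h01 : M 0 1 = 2 * k + 1) (h12 : M 1 2 = 2 * l + 1) (h20 : M 2 0 = 2 * m + 1) :
    ∀ c₀ c₁ c₂ : W,
      c₀ = cs.simple 0 → c₁ = cs.simple 1 → c₂ = cs.simple 2 →
      IsConj c₀ c₁ ∧ IsConj c₁ c₂ ∧ IsConj c₀ c₂ ∧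
      Subgroup.centralizer {c₀} =
        Subgroup.closure {c₀, (c₂ * c₀) ^ m * (c₁ * c₂) ^ l * (c₀ * c₁) ^ k} ∧
      orderOf c₀ = 2 ∧
      ¬ IsOfFinOrder ((c₂ * c₀) ^ m * (c₁ * c₂) ^ l * (c₀ * c₁) ^ k) ∧
      Commute c₀ ((c₂ * c₀) ^ m * (c₁ * c₂) ^ l * (c₀ * c₁) ^ k) ∧
      Nonempty ((Subgroup.centralizer {c₀} : Subgroup _) ≃* Multiplicative (ZMod 2 × ℤ)) := by
  rintro c₀ c₁ c₂ rfl rfl rfl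
  have h10 : M 1 0 = 2 * k + 1 := by rw [M.symmetric, h01]
  have h21 : M 2 1 = 2 * l + 1 := by rw [M.symmetric, h12]
  have h02 : M 0 2 = 2 * m + 1 := by rw [M.symmetric, h20]
  have hall : ∀ i j : Fin 3, i ≠ j → 3 ≤ M i j ∧ Odd (M i j) := by
    intro i j hij
    have ho : ∀ n : ℕ, Odd (2 * n + 1) := fun n => ⟨n, rfl⟩
    fin_cases i <;> fin_cases j <;> simp at hij <;>
      simp only [Fin.zero_eta, Fin.mk_one, Fin.reduceFinMk, h01, h12, h20, h10, h21, h02] <;>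
      exact ⟨by omega, ho _⟩
  have h3 : ∀ i j, i ≠ j → 3 ≤ M i j := fun i j h => (hall i j h).1
  have hodd : ∀ i j, i ≠ j → Odd (M i j) := fun i j h => (hall i j h).2
  have hM : ∀ i j, M i j ≠ 0 := by
    intro i j
    by_cases h : i = j
    · subst h; simp
    · have := h3 i j h; omega
  have hcomm := comm_ww cs h01 h12 h20
  have hinf := ww_inf cs hM h01 h12 h20 h3
  have hform := fun x hx => cent_form cs hM h01 h12 h20 hodd (x := x) hx
  have hconj : ∀ i j : Fin 3, ∀ n : ℕ, M i j = 2 * n + 1 →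
      IsConj (cs.simple i) (cs.simple j) := by
    intro i j n h
    rw [isConj_iff]
    refine ⟨(cs.simple i * cs.simple j) ^ n, ?_⟩
    rw [conj_simple cs i j h, mul_inv_cancel_right]
  have hne : cs.simple (0 : Fin 3) ≠ 1 := by
    intro h
    have := cs.length_simple 0
    rw [h, cs.length_one] at this
    omega
  have hself := cs.simple_mul_simple_self 0
  have hmemc : ∀ x, x ∈ Subgroup.centralizer {cs.simple 0} ↔ Commute (cs.simple 0) x := by
    intro x
    rw [Subgroup.mem_centralizer_singleton_iff]
    exact ⟨fun h => h.symm, fun h => h.symm⟩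
  change _ ∧ _ ∧ _ ∧ _ = Subgroup.closure {_, ww cs k l m} ∧ _ ∧ ¬ IsOfFinOrder (ww cs k l m) ∧
    Commute _ (ww cs k l m) ∧ _
  refine ⟨hconj 0 1 k h01, hconj 1 2 l h12, hconj 0 2 m h02, ?_, ?_, hinf, hcomm, ?_⟩
  · apply le_antisymm
    · intro x hx
      have m0 : cs.simple 0 ∈ Subgroup.closure {cs.simple 0, ww cs k l m} :=
        Subgroup.subset_closure (by simp)
      have m1 : ww cs k l m ∈ Subgroup.closure {cs.simple 0, ww cs k l m} :=
        Subgroup.subset_closure (by simp)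
      obtain ⟨n, h | h⟩ := hform x ((hmemc x).1 hx)
      · rw [h]; exact Subgroup.zpow_mem _ m1 n
      · rw [h]; exact Subgroup.mul_mem _ (Subgroup.zpow_mem _ m1 n) m0
    · rw [Subgroup.closure_le]
      rintro x (rfl | hx)
      · exact (hmemc _).2 (Commute.refl _)
      · rw [Set.mem_singleton_iff] at hx
        subst hx
        exact (hmemc _).2 hcomm
  · exact orderOf_eq_prime (by rw [pow_two, hself]) hne
  · exact iso_of _ ((hmemc _).2 (Commute.refl _)) ((hmemc _).2 hcomm)
      (fun x hx => hform x ((hmemc x).1 hx)) hself hne hcomm hinf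

/-- The Coxeter matrix of the triangle group. -/
def triM (p q r : ℕ) (hp : p ≠ 1) (hq : q ≠ 1) (hr : r ≠ 1) : CoxeterMatrix (Fin 3) where
  M := !![1, p, r; p, 1, q; r, q, 1]
  isSymm := by
    ext i j
    fin_cases i <;> fin_cases j <;> rfl
  diagonal i := by fin_cases i <;> rfl
  off_diagonal i j h := by
    fin_cases i <;> fin_cases j <;> simp_all

variable {p q r : ℕ} (hp : p ≠ 1) (hq : q ≠ 1) (hr : r ≠ 1)

lemma tri_rel (x : FreeGroup (Fin 3)) (hx : x ∈ triRels p q r) :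
    (PresentedGroup.mk (triRels p q r) x : Tri p q r) = 1 :=
  (PresentedGroup.one_of_mem hx)

lemma cgen_sq (i : Fin 3) : cgen p q r i * cgen p q r i = 1 := by
  have h : FreeGroup.of i ^ 2 ∈ triRels p q r := by
    fin_cases i <;> simp [triRels]
  have := tri_rel _ h
  rw [pow_two] at this
  exact this

lemma cgen_inv (i j : Fin 3) (n : ℕ) (h : (cgen p q r i * cgen p q r j) ^ n = 1) :
    (cgen p q r j * cgen p q r i) ^ n = 1 := by
  have hi := inv_eq_of_mul_eq_one_left (cgen_sq (p := p) (q := q) (r := r) i)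
  have hj := inv_eq_of_mul_eq_one_left (cgen_sq (p := p) (q := q) (r := r) j)
  have : cgen p q r j * cgen p q r i = (cgen p q r i * cgen p q r j)⁻¹ := by
    rw [mul_inv_rev, hi, hj]
  rw [this, inv_pow, h, inv_one]

lemma cgen_rel (i j : Fin 3) :
    (cgen p q r i * cgen p q r j) ^ (triM p q r hp hq hr i j) = 1 := by
  have a01 : (cgen p q r 0 * cgen p q r 1) ^ p = 1 := 
    tri_rel ((FreeGroup.of 0 * FreeGroup.of 1) ^ p) (by simp [triRels])
  have a12 : (cgen p q r 1 * cgen p q r 2) ^ q = 1 := 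
    tri_rel ((FreeGroup.of 1 * FreeGroup.of 2) ^ q) (by simp [triRels])
  have a20 : (cgen p q r 2 * cgen p q r 0) ^ r = 1 := 
    tri_rel ((FreeGroup.of 2 * FreeGroup.of 0) ^ r) (by simp [triRels])
  have hd : ∀ i, (cgen p q r i * cgen p q r i) ^ 1 = 1 := fun i => by rw [pow_one, cgen_sq]
  fin_cases i <;> fin_cases j
  · exact hd 0
  · exact a01
  · exact cgen_inv _ _ _ a20
  · exact cgen_inv _ _ _ a01
  · exact hd 1
  · exact a12
  · exact a20
  · exact cgen_inv _ _ _ a12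
  · exact hd 2

def toCox : Tri p q r →* (triM p q r hp hq hr).Group :=
  PresentedGroup.toGroup (rels := triRels p q r) (f := (triM p q r hp hq hr).simple) (by
    have key := (triM p q r hp hq hr).toCoxeterSystem.simple_mul_simple_pow
    have hsq := (triM p q r hp hq hr).toCoxeterSystem.simple_mul_simple_self
    rintro x (rfl | rfl | rfl | rfl | rfl | rfl) <;>
      simp only [map_pow, map_mul, FreeGroup.lift_apply_of]
    · rw [pow_two]; exact hsq 0
    · rw [pow_two]; exact hsq 1
    · rw [pow_two]; exact hsq 2
    · exact key 0 1
    · exact key 1 2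
    · exact key 2 0)

def ofCox : (triM p q r hp hq hr).Group →* Tri p q r :=
  (triM p q r hp hq hr).toCoxeterSystem.lift ⟨cgen p q r, cgen_rel hp hq hr⟩

lemma toCox_cgen (i : Fin 3) : toCox hp hq hr (cgen p q r i) = (triM p q r hp hq hr).simple i :=
  PresentedGroup.toGroup.of _

lemma ofCox_simple (i : Fin 3) : ofCox hp hq hr ((triM p q r hp hq hr).simple i) = cgen p q r i :=
  (triM p q r hp hq hr).toCoxeterSystem.lift_apply_simple (cgen_rel hp hq hr) i

def triEquiv : Tri p q r ≃* (triM p q r hp hq hr).Group :=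
  MonoidHom.toMulEquiv (toCox hp hq hr) (ofCox hp hq hr)
    (by
      apply PresentedGroup.ext
      intro i
      change ofCox hp hq hr (toCox hp hq hr (cgen p q r i)) = cgen p q r i
      rw [toCox_cgen, ofCox_simple])
    (by
      apply (triM p q r hp hq hr).toCoxeterSystem.ext_simple
      intro i
      change toCox hp hq hr (ofCox hp hq hr ((triM p q r hp hq hr).simple i)) =
        (triM p q r hp hq hr).simple i
      rw [ofCox_simple, toCox_cgen])

def triCS : CoxeterSystem (triM p q r hp hq hr) (Tri p q r) := ⟨triEquiv hp hq hr⟩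

lemma triCS_simple (i : Fin 3) : (triCS hp hq hr).simple i = cgen p q r i := 
  ofCox_simple hp hq hr i

end
end TriProof

/-- in `Δ(2k+1, 2l+1, 2m+1)` (all link periods odd), the canonical
reflections are pairwise conjugate, the centralizer of `c₀` is generated by `c₀` and
`w = (c₂c₀)^m (c₁c₂)^l (c₀c₁)^k`, and this centralizer is `ℤ/2 × ℤ`. -/
theorem centralizer_all_odd (k l m : ℕ) (hk : 1 ≤ k) (hl : 1 ≤ l) (hm : 1 ≤ m)
    (harea : (1 : ℚ) / (2 * k + 1) + 1 / (2 * l + 1) + 1 / (2 * m + 1) < 1) :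
    ∀ c₀ c₁ c₂ : Tri (2 * k + 1) (2 * l + 1) (2 * m + 1),
      c₀ = cgen _ _ _ 0 → c₁ = cgen _ _ _ 1 → c₂ = cgen _ _ _ 2 →
      IsConj c₀ c₁ ∧ IsConj c₁ c₂ ∧ IsConj c₀ c₂ ∧
      Subgroup.centralizer {c₀} =
        Subgroup.closure {c₀, (c₂ * c₀) ^ m * (c₁ * c₂) ^ l * (c₀ * c₁) ^ k} ∧
      orderOf c₀ = 2 ∧
      ¬ IsOfFinOrder ((c₂ * c₀) ^ m * (c₁ * c₂) ^ l * (c₀ * c₁) ^ k) ∧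
      Commute c₀ ((c₂ * c₀) ^ m * (c₁ * c₂) ^ l * (c₀ * c₁) ^ k) ∧
      Nonempty ((Subgroup.centralizer {c₀} : Subgroup _) ≃* Multiplicative (ZMod 2 × ℤ)) := by

  rintro c₀ c₁ c₂ h0 h1 h2
  have hp : 2 * k + 1 ≠ 1 := by omega
  have hq : 2 * l + 1 ≠ 1 := by omega
  have hr : 2 * m + 1 ≠ 1 := by omega
  exact TriProof.main_cs (TriProof.triCS hp hq hr) hk hl hm rfl rfl rfl c₀ c₁ c₂
    (h0.trans (TriProof.triCS_simple hp hq hr 0).symm)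
    (h1.trans (TriProof.triCS_simple hp hq hr 1).symm)
    (h2.trans (TriProof.triCS_simple hp hq hr 2).symm)
end

section
/- Let k, l, m ≥ 1 be integers with 1/(2k) + 1/(2l+1) + 1/(2m+1) < 1, and let Δ = Δ(2k, 2l+1, 2m+1) with canonical generators c₀, c₁, c₂ (so the first link period is even and the other two are odd). Then c₀, c₁, c₂ are pairwise conjugate in Δ, and the centralizer of c₀ in Δ equals the subgroup generated by the three elements c₀, (c₀c₁)^k, and (c₂c₀)^m (c₁c₂)^l (c₁c₀)^k (c₂c₁)^l (c₀c₂)^m. -/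
section keysec
variable {ι G : Type} [Group G]

theorem tri_word_mem {c : ι → G} {J : Set ι} {ω : List ι} (h : ∀ i ∈ ω, i ∈ J) :
    (ω.map c).prod ∈ Subgroup.closure (c '' J) := by
  apply Subgroup.list_prod_mem
  intro x hx
  obtain ⟨i, hi, rfl⟩ := List.mem_map.1 hx
  exact Subgroup.subset_closure ⟨i, h i hi, rfl⟩

theorem tri_mem_word {c : ι → G} (hc : ∀ i, c i * c i = 1) {J : Set ι} {w : G}
    (h : w ∈ Subgroup.closure (c '' J)) :
    ∃ ω : List ι, (∀ i ∈ ω, i ∈ J) ∧ (ω.map c).prod = w := by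
  induction h using Subgroup.closure_induction with
  | mem x hx =>
    obtain ⟨i, hi, rfl⟩ := hx
    exact ⟨[i], by simpa using hi, by simp⟩
  | one => exact ⟨[], by simp, by simp⟩
  | mul x y _ _ hx hy =>
    obtain ⟨a, ha, rfl⟩ := hx
    obtain ⟨b, hb, rfl⟩ := hy
    refine ⟨a ++ b, ?_, by simp⟩
    intro i hi
    rcases List.mem_append.1 hi with h | h
    · exact ha i h
    · exact hb i h
  | inv x _ hx =>
    obtain ⟨a, ha, rfl⟩ := hx
    refine ⟨a.reverse, by simpa using ha, ?_⟩
    rw [List.prod_inv_reverse, ← List.map_reverse, ← List.map_reverse, List.map_map]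
    congr 1
    apply List.map_congr_left
    intro i _
    exact (inv_eq_of_mul_eq_one_left (hc i)).symm

/-- Exchange condition. -/
theorem tri_exchange (c : ι → G) (hc : ∀ i, c i * c i = 1)
    (n : G → G → ZMod 2) (n_one : ∀ t, n 1 t = 0)
    (n_mul : ∀ w v t, n (w * v) t = n v t + n w (v * t * v⁻¹))
    (n_ne : ∀ i t, t ≠ c i → n (c i) t = 0) (J : Set ι) (t : G) (ω : List ι) :
    (∀ i ∈ ω, i ∈ J) → n (ω.map c).prod t ≠ 0 →
    ∃ ω' : List ι, (∀ i ∈ ω', i ∈ J) ∧ ω'.length < ω.length ∧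
      (ω'.map c).prod = (ω.map c).prod * t := by
  induction ω with
  | nil => intro _ h; simp [n_one] at h
  | cons i ω ih =>
    intro hJ h
    rw [List.map_cons, List.prod_cons, n_mul] at h
    by_cases h1 : n (ω.map c).prod t = 0
    · rw [h1, zero_add] at h
      have h2 : (ω.map c).prod * t * (ω.map c).prod⁻¹ = c i := by
        by_contra h3
        exact h (n_ne _ _ h3)
      refine ⟨ω, fun j hj => hJ j (List.mem_cons_of_mem _ hj), by simp, ?_⟩
      rw [mul_inv_eq_iff_eq_mul] at h2
      rw [List.map_cons, List.prod_cons, mul_assoc, h2, ← mul_assoc, hc, one_mul]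
    · obtain ⟨ω', h2, h3, h4⟩ := ih (fun j hj => hJ j (List.mem_cons_of_mem _ hj)) h1
      refine ⟨i :: ω', ?_, by simpa using h3, ?_⟩
      · intro j hj
        rcases List.mem_cons.1 hj with rfl | hj
        · exact hJ _ List.mem_cons_self
        · exact h2 j hj
      · simp [h4, mul_assoc]

theorem tri_key (c : ι → G) (hc : ∀ i, c i * c i = 1)
    (hgen : ∀ w : G, w ∈ Subgroup.closure (c '' Set.univ))
    (n : G → G → ZMod 2) (n_one : ∀ t, n 1 t = 0)
    (n_mul : ∀ w v t, n (w * v) t = n v t + n w (v * t * v⁻¹))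
    (n_ne : ∀ i t, t ≠ c i → n (c i) t = 0) (n_self : ∀ i, n (c i) (c i) = 1)
    (P : ι → ι → G → Prop) (P_one : ∀ s, P s s 1) (P_self : ∀ s, P s s (c s))
    (P_mul : ∀ r s t u v, P s t u → P r s v → P r t (u * v))
    (P_dih : ∀ r s j u, r ≠ s → u ∈ Subgroup.closure (c '' {r, s}) → (j = r ∨ j = s) →
      u * c s = c j * u → P s j u) :
    ∀ w s t, w * c s = c t * w → P s t w := by
  have main : ∀ N : ℕ, ∀ ω : List ι, ω.length = N → ∀ s t,
      (ω.map c).prod * c s = c t * (ω.map c).prod → P s t (ω.map c).prod := by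
    intro N
    induction N using Nat.strong_induction_on with
    | _ N IH =>
    intro ω hN s t hw
    rcases List.eq_nil_or_concat ω with rfl | ⟨ω1, r, rfl⟩
    · simp only [List.map_nil, List.prod_nil] at hw ⊢
      by_cases hst : t = s
      · subst hst; exact P_one _
      · exact P_dih t s t 1 hst (one_mem _) (Or.inl rfl) hw
    · have hwr : ((ω1.concat r).map c).prod = (ω1.map c).prod * c r := by simp
      by_cases hrs : r = s
      · subst hrs
        rw [hwr] at hw ⊢
        refine P_mul _ r _ _ _ (IH ω1.length (by simp at hN; omega) ω1 rfl r t ?_) (P_self r)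
        rw [mul_assoc, hc, mul_one] at hw
        nth_rw 2 [hw]
        rw [← mul_assoc, ← mul_assoc, hc, one_mul]
      · -- minimal coset representative
        set w := ((ω1.concat r).map c).prod with hwdef
        let Q : ℕ → Prop := fun a => ∃ ω' : List ι, ω'.length = a ∧
          (ω'.map c).prod⁻¹ * w ∈ Subgroup.closure (c '' {r, s})
        have hcr : c r ∈ Subgroup.closure (c '' {r, s}) :=
          Subgroup.subset_closure ⟨r, by simp, rfl⟩
        have hcs : c s ∈ Subgroup.closure (c '' {r, s}) :=
          Subgroup.subset_closure ⟨s, by simp, rfl⟩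
        have hQ1 : Q ω1.length := ⟨ω1, rfl, by rw [hwr]; simpa using hcr⟩
        classical
        obtain ⟨ω', hlen, hu⟩ := Nat.find_spec (⟨_, hQ1⟩ : ∃ a, Q a)
        have hmin : ∀ ω'' : List ι, ω''.length < ω'.length →
            (ω''.map c).prod⁻¹ * w ∉ Subgroup.closure (c '' {r, s}) := by
          intro ω'' h1 h2
          exact Nat.find_min (⟨_, hQ1⟩ : ∃ a, Q a) (hlen ▸ h1) ⟨ω'', rfl, h2⟩
        have hle : ω'.length < N := by
          have := Nat.find_min' (⟨_, hQ1⟩ : ∃ a, Q a) hQ1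
          simp at hN
          omega
        set v := (ω'.map c).prod with hv
        set u := v⁻¹ * w with hudef
        have hwvu : w = v * u := by rw [hudef]; group
        have hn0 : ∀ q ∈ Subgroup.closure (c '' {r, s}), n v q = 0 := by
          intro q hq
          by_contra h
          obtain ⟨ω'', -, h2, h3⟩ := tri_exchange c hc n n_one n_mul n_ne Set.univ q ω'
            (by simp) h
          apply hmin ω'' h2
          rw [h3, mul_inv_rev, mul_assoc]
          exact mul_mem (inv_mem hq) hu
        set p := u * c s * u⁻¹ with hp
        have hpm : p ∈ Subgroup.closure (c '' {r, s}) := mul_mem (mul_mem hu hcs) (inv_mem hu)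
        have hvp : v * p = c t * v := by
          have : w * c s * u⁻¹ = c t * w * u⁻¹ := by rw [hw]
          rw [hwvu] at this
          rw [hp]
          calc _ = v * u * c s * u⁻¹ := by group
            _ = _ := this
            _ = _ := by group
        have hInv : ∀ q ∈ Subgroup.closure (c '' {r, s}), n p q ≠ 0 → q = p := by
          intro q hq hnq
          have h1 : n (v * p) q = n p q := by
            rw [n_mul, hn0 _ (mul_mem (mul_mem hpm hq) (inv_mem hpm)), add_zero]
          rw [hvp, n_mul, hn0 q hq, zero_add] at h1
          have h2 : v * q * v⁻¹ = c t := by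
            by_contra h3
            exact hnq (by rw [← h1, n_ne _ _ h3])
          rw [mul_inv_eq_iff_eq_mul, ← hvp] at h2
          exact mul_left_cancel h2
        -- `p` is a generator
        have hpj : ∃ j, (j = r ∨ j = s) ∧ p = c j := by
          let R : ℕ → Prop := fun a => ∃ α : List ι, α.length = a ∧ (∀ i ∈ α, i ∈ ({r, s} : Set ι)) ∧
            (α.map c).prod = p
          have hR : ∃ a, R a := by
            obtain ⟨α, h1, h2⟩ := tri_mem_word hc hpm
            exact ⟨_, α, rfl, h1, h2⟩
          obtain ⟨α, hα, hαJ, hαp⟩ := Nat.find_spec hR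
          rcases List.eq_nil_or_concat α with rfl | ⟨β, j, rfl⟩
          · exfalso
            simp only [List.map_nil, List.prod_nil] at hαp
            have : c s = 1 := by
              have h2 : u * c s * u⁻¹ = 1 := hαp.symm
              rw [mul_inv_eq_one] at h2
              exact mul_left_cancel (h2.trans (mul_one u).symm)
            have h3 := n_self s
            rw [this, n_one] at h3
            exact absurd h3 (by decide)
          · have hβj : (β.map c).prod * c j = p := by rw [← hαp]; simp
            have hjJ : j ∈ ({r, s} : Set ι) := hαJ j (by simp)
            have hβJ : ∀ i ∈ β, i ∈ ({r, s} : Set ι) := fun i hi => hαJ i (by simp [hi])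
            have h0 : n (β.map c).prod (c j) = 0 := by
              by_contra h
              obtain ⟨γ, h1, h2, h3⟩ := tri_exchange c hc n n_one n_mul n_ne {r, s} (c j) β hβJ h
              refine Nat.find_min hR (m := γ.length) ?_ ⟨γ, rfl, h1, h3.trans hβj⟩
              rw [← hα]
              simp
              omega
            refine ⟨j, by simpa using hjJ, ?_⟩
            refine (hInv (c j) (Subgroup.subset_closure ⟨j, hjJ, rfl⟩) ?_).symm
            rw [← hβj, n_mul, n_self, mul_inv_cancel_right, h0]
            simp
        obtain ⟨j, hj, hpj⟩ := hpj
        rw [hwvu]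
        refine P_mul _ j _ _ _ (IH ω'.length hle ω' rfl j t ?_) (P_dih r s j u hrs hu hj ?_)
        · rw [← hv, ← hpj, hvp]
        · rw [← hpj, hp]; group
  intro w s t h
  obtain ⟨ω, -, rfl⟩ := tri_mem_word hc (hgen w)
  exact main _ ω rfl s t h

end keysec

section sigsec
variable {G : Type} [Group G]
open Classical in
/-- Bourbaki's signed permutation of `G × ZMod 2`. -/
noncomputable def triSig (c : G) (h : c * c = 1) : Equiv.Perm (G × ZMod 2) where
  toFun x := (c * x.1 * c, x.2 + if x.1 = c then 1 else 0)
  invFun x := (c * x.1 * c, x.2 + if x.1 = c then 1 else 0)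
  left_inv := by
    rintro ⟨t, e⟩
    have h1 : c * t * c = c ↔ t = c := by
      constructor
      · intro h2
        have h3 : c * (c * t * c) * c = c * c * c := by rw [h2]
        have h4 : c * (c * t * c) * c = (c * c) * t * (c * c) := by group
        rw [h4, h] at h3
        simpa using h3
      · rintro rfl; rw [h, one_mul]
    have h4 : c * (c * t * c) * c = (c * c) * t * (c * c) := by group
    ext
    · simp [h4, h]
    · simp only [h1, add_assoc, CharTwo.add_self_eq_zero, add_zero]
  right_inv := by
    rintro ⟨t, e⟩
    have h1 : c * t * c = c ↔ t = c := by
      constructor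
      · intro h2
        have h3 : c * (c * t * c) * c = c * c * c := by rw [h2]
        have h4 : c * (c * t * c) * c = (c * c) * t * (c * c) := by group
        rw [h4, h] at h3
        simpa using h3
      · rintro rfl; rw [h, one_mul]
    have h4 : c * (c * t * c) * c = (c * c) * t * (c * c) := by group
    ext
    · simp [h4, h]
    · simp only [h1, add_assoc, CharTwo.add_self_eq_zero, add_zero]

theorem triSig_sq (c : G) (h : c * c = 1) : triSig c h ^ 2 = 1 := by
  rw [sq, mul_eq_one_iff_eq_inv]
  rfl

open Classical in
theorem triSig_apply (c : G) (h : c * c = 1) (t : G) (e : ZMod 2) :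
    triSig c h (t, e) = (c * t * c⁻¹, e + if t = c then 1 else 0) := by
  rw [inv_eq_of_mul_eq_one_left h]; rfl

open Classical in
theorem triSig_pow (a b : G) (ha : a * a = 1) (hb : b * b = 1) (j : ℕ) (t : G) (e : ZMod 2) :
    ((triSig a ha * triSig b hb) ^ j) (t, e) =
      ((a * b) ^ j * t * ((a * b) ^ j)⁻¹,
        e + ∑ i ∈ Finset.range (2 * j), if t = b * (a * b) ^ i then 1 else 0) := by
  have hbi : b⁻¹ = b := inv_eq_of_mul_eq_one_left hb
  have hai : a⁻¹ = a := inv_eq_of_mul_eq_one_left ha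
  have hx : ∀ i : ℕ, b * (a * b) ^ i = ((a * b) ^ i)⁻¹ * b := by
    intro i
    have : b * (a * b) ^ i * b⁻¹ = ((a * b) ^ i)⁻¹ := by
      rw [← conj_pow, ← inv_pow]
      congr 1
      rw [mul_inv_rev, hai, hbi, mul_assoc, mul_assoc, hb, mul_one]
    rw [← this]; group
  have hconj : ∀ i d : ℕ, (a * b) ^ i * t * ((a * b) ^ i)⁻¹ = b * (a * b) ^ d ↔
      t = b * (a * b) ^ (2 * i + d) := by
    intro i d
    rw [mul_inv_eq_iff_eq_mul, ← eq_inv_mul_iff_mul_eq]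
    rw [two_mul, add_assoc, pow_add _ i (i + d), ← mul_assoc b, hx i, add_comm i d, pow_add]
    simp only [mul_assoc]
  induction j with
  | zero => simp
  | succ j ih =>
    rw [pow_succ', Equiv.Perm.mul_apply, ih, Equiv.Perm.mul_apply, triSig_apply, triSig_apply]
    have h1 := hconj j 0
    have h2 := hconj j 1
    simp only [pow_zero, mul_one, add_zero, pow_one] at h1 h2
    have h3 : b * ((a * b) ^ j * t * ((a * b) ^ j)⁻¹) * b⁻¹ = a ↔ t = b * (a * b) ^ (2 * j + 1) := by
      rw [← h2]
      rw [mul_inv_eq_iff_eq_mul, ← eq_inv_mul_iff_mul_eq, hbi]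
    simp only [h1, h3]
    rw [show 2 * (j + 1) = 2 * j + 1 + 1 by ring, Finset.sum_range_succ, Finset.sum_range_succ]
    ext
    · simp only [pow_succ' (a * b) j, mul_inv_rev, mul_assoc]
    · simp only [add_assoc]

theorem triSig_rel (a b : G) (ha : a * a = 1) (hb : b * b = 1) (m : ℕ) (hm : (a * b) ^ m = 1) :
    (triSig a ha * triSig b hb) ^ m = 1 := by
  classical
  ext1 ⟨t, e⟩
  rw [triSig_pow, hm, two_mul, Finset.sum_range_add]
  simp [pow_add, hm, CharTwo.add_self_eq_zero]

/-- Existence of the inversion cocycle. -/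
theorem tri_cocycle {ι : Type} (c : ι → G) (hc : ∀ i, c i * c i = 1)
    (hgen : ∀ w : G, w ∈ Subgroup.closure (Set.range c))
    (φ : G →* Equiv.Perm (G × ZMod 2)) (hφ : ∀ i, φ (c i) = triSig (c i) (hc i)) :
    ∃ n : G → G → ZMod 2, (∀ t, n 1 t = 0) ∧
      (∀ w v t, n (w * v) t = n v t + n w (v * t * v⁻¹)) ∧
      (∀ i t, t ≠ c i → n (c i) t = 0) ∧ (∀ i, n (c i) (c i) = 1) := by
  have key : ∀ w : G, ∃ d : G → ZMod 2, ∀ t e, φ w (t, e) = (w * t * w⁻¹, e + d t) := by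
    intro w
    induction hgen w using Subgroup.closure_induction with
    | mem x hx =>
      obtain ⟨i, rfl⟩ := hx
      classical
      exact ⟨fun t => if t = c i then 1 else 0, fun t e => by rw [hφ, triSig_apply]⟩
    | one => exact ⟨fun _ => 0, by simp⟩
    | mul x y _ _ hx hy =>
      obtain ⟨d, hd⟩ := hx
      obtain ⟨d', hd'⟩ := hy
      refine ⟨fun t => d' t + d (y * t * y⁻¹), fun t e => ?_⟩
      rw [map_mul, Equiv.Perm.mul_apply, hd', hd]
      simp [mul_assoc, add_assoc]
    | inv x _ hx =>
      obtain ⟨d, hd⟩ := hx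
      refine ⟨fun t => - d (x⁻¹ * t * x), fun t e => ?_⟩
      rw [map_inv, Equiv.Perm.inv_eq_iff_eq, hd]
      simp [mul_assoc, add_assoc, CharTwo.add_self_eq_zero]
  choose n hn using key
  refine ⟨n, fun t => ?_, fun w v t => ?_, fun i t h => ?_, fun i => ?_⟩
  · have := hn 1 t 0
    simpa using this.symm
  · have h1 := hn (w * v) t 0
    rw [map_mul, Equiv.Perm.mul_apply, hn, hn] at h1
    simpa using (congrArg Prod.snd h1).symm
  · have h1 := hn (c i) t 0
    rw [hφ, triSig_apply] at h1
    simpa [h] using (congrArg Prod.snd h1).symm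
  · have h1 := hn (c i) (c i) 0
    rw [hφ, triSig_apply] at h1
    simpa using (congrArg Prod.snd h1).symm
end sigsec

section geosec
open Real Polynomial Polynomial.Chebyshev

theorem tri_sin_ne {n : ℕ} (hn : 3 ≤ n) : sin (2 * π / n) ≠ 0 := by
  have h3 : (3 : ℝ) ≤ n := by exact_mod_cast hn
  apply ne_of_gt
  apply sin_pos_of_pos_of_lt_pi
  · positivity
  · rw [div_lt_iff₀ (by linarith)]
    nlinarith [pi_pos]

theorem tri_two_cos (θ : ℝ) : 4 * cos θ ^ 2 - 2 = 2 * cos (2 * θ) := by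
  rw [cos_two_mul]; ring

variable {M : Type} [AddCommGroup M] [Module ℝ M] {x y : M} {f g : Module.Dual ℝ M}

theorem tri_refl_pow (hf : f x = 2) (hg : g y = 2) {n : ℕ} (hn : 3 ≤ n)
    (h : f y * g x = 4 * cos (π / n) ^ 2) :
    (Module.reflection hf * Module.reflection hg) ^ n = 1 := by
  have hs := tri_sin_ne hn
  have hn0 : (n : ℝ) ≠ 0 := by positivity
  set θ := 2 * π / n with hθ
  have hnθ : (n : ℝ) * θ = 2 * π := by rw [hθ]; field_simp
  have ht : 2 * cos θ = f y * g x - 2 := by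
    rw [h, tri_two_cos, hθ]; congr 2; ring
  have hS : ∀ j : ℤ, (S ℝ j).eval (2 * cos θ) * sin θ = sin ((j + 1) * θ) :=
    fun j => S_two_mul_real_cos θ j
  ext1 z
  rw [Module.reflection_mul_reflection_pow_apply hf hg n z _ ht]
  rcases Nat.even_or_odd' n with ⟨q, hq | hq⟩
  · have e1 : ((n : ℤ) - 2) / 2 = q - 1 := by omega
    have e2 : ((n : ℤ) - 1) / 2 = q - 1 := by omega
    have z1 : (S ℝ ((q : ℤ) - 1)).eval (2 * cos θ) = 0 := by
      have h1 := hS ((q : ℤ) - 1)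
      have h2 : (((q : ℤ) - 1 : ℤ) + 1 : ℝ) * θ = π := by
        push_cast
        rw [hq] at hnθ; push_cast at hnθ; linarith
      rw [h2, sin_pi] at h1
      exact (mul_eq_zero.1 h1).resolve_right hs
    rw [e1, e2, z1]
    simp
  · have e1 : ((n : ℤ) - 2) / 2 = q - 1 := by omega
    have e2 : ((n : ℤ) - 1) / 2 = q := by omega
    have e3 : ((n : ℤ) - 3) / 2 = q - 1 := by omega
    have e4 : (n : ℤ) / 2 = q := by omega
    have z1 : (S ℝ (q : ℤ)).eval (2 * cos θ) + (S ℝ ((q : ℤ) - 1)).eval (2 * cos θ) = 0 := by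
      have h1 := hS ((q : ℤ) - 1)
      have h0 := hS (q : ℤ)
      have h2 : (((q : ℤ) - 1 : ℤ) + 1 : ℝ) * θ = 2 * π - ((q : ℤ) + 1 : ℝ) * θ := by
        push_cast
        rw [hq] at hnθ; push_cast at hnθ; linarith
      rw [h2, sin_two_pi_sub] at h1
      have h3 : ((S ℝ (q : ℤ)).eval (2 * cos θ) + (S ℝ ((q : ℤ) - 1)).eval (2 * cos θ)) * sin θ = 0 := by
        rw [add_mul, h0, h1]; ring
      exact (mul_eq_zero.1 h3).resolve_right hs
    rw [e1, e2, e3, e4, z1]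
    simp

theorem tri_refl_pow_two (hf : f x = 2) (hg : g y = 2) (h1 : f y = 0) (h2 : g x = 0) :
    (Module.reflection hf * Module.reflection hg) ^ 2 = 1 := by
  ext1 z
  rw [sq]
  simp only [LinearEquiv.mul_apply, Module.reflection_apply, map_sub, map_smul, hf, hg, h1, h2]
  simp only [LinearEquiv.coe_one, id_eq]
  module

/-- exactness of the order -/
theorem tri_refl_exact (hf : f x = 2) (hg : g y = 2) {k : ℕ} (hk : 1 ≤ k)
    (h1 : f y = - 2 * cos (π / (2 * k : ℕ))) (h2 : g x = - 2 * cos (π / (2 * k : ℕ)))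
    (hli : LinearIndependent ℝ ![x, y]) (j : ℤ)
    (hj : (Module.reflection hf * Module.reflection hg) ^ j = 1) : (2 * k : ℤ) ∣ j := by
  have ht : 2 * cos (π / k) = f y * g x - 2 := by
    rw [h1, h2]
    have := tri_two_cos (π / (2 * k : ℕ))
    have e : 2 * (π / (2 * k : ℕ)) = π / k := by push_cast; field_simp
    rw [e] at this
    linarith
  have hx := Module.reflection_mul_reflection_zpow_apply_self hf hg j _ ht
  rw [hj, LinearEquiv.coe_one, id_eq] at hx
  have hx' : ((S ℝ j).eval (2 * cos (π / k)) + (S ℝ (j - 1)).eval (2 * cos (π / k)) - 1) • x +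
      ((S ℝ (j - 1)).eval (2 * cos (π / k)) * -g x) • y = 0 := by
    refine Eq.trans ?_ (sub_eq_zero.2 hx.symm)
    module
  obtain ⟨ha, hb⟩ := LinearIndependent.pair_iff.1 hli _ _ hx'
  rcases Nat.lt_or_ge 1 k with hk2 | hk2
  · have hk2' : (2 : ℝ) ≤ k := by exact_mod_cast hk2
    have hs : sin (π / k) ≠ 0 := by
      apply ne_of_gt
      apply sin_pos_of_pos_of_lt_pi
      · positivity
      · rw [div_lt_iff₀ (by linarith)]
        nlinarith [pi_pos]
    have hgx : -g x ≠ 0 := by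
      rw [h2]
      have : 0 < cos (π / (2 * k : ℕ)) := by
        apply cos_pos_of_mem_Ioo
        constructor
        · have : 0 < π / (2 * k : ℕ) := by positivity
          linarith [pi_pos]
        · push_cast
          rw [div_lt_iff₀ (by linarith)]
          nlinarith [pi_pos]
      intro h; linarith
    have hS1 := S_two_mul_real_cos (π / k) (j - 1)
    have hS0 := S_two_mul_real_cos (π / k) j
    have hz : (S ℝ (j - 1)).eval (2 * cos (π / k)) = 0 := (mul_eq_zero.1 hb).resolve_right hgx
    rw [hz, zero_mul] at hS1
    have hS1' := hS1.symm
    rw [sin_eq_zero_iff] at hS1'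
    obtain ⟨d, hd⟩ := hS1'
    have hjd : j = d * k := by
      push_cast at hd
      field_simp at hd
      have : (j : ℝ) = d * k := by linarith
      exact_mod_cast this
    have hone : (S ℝ j).eval (2 * cos (π / k)) = 1 := by rw [hz] at ha; linarith
    have e : ((j : ℝ) + 1) * (π / k) = π / k + d * π := by
      rw [hjd]; push_cast; field_simp; ring
    rw [hone, e, sin_add_int_mul_pi, one_mul] at hS0
    rcases Int.even_or_odd d with he | ho
    · obtain ⟨b, hb⟩ := he
      exact ⟨b, by rw [hjd, hb]; ring⟩
    · rw [ho.neg_one_zpow] at hS0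
      exfalso
      apply hs
      linarith
  · have hk1 : k = 1 := by omega
    subst hk1
    simp only [Nat.cast_one, div_one, cos_pi, mul_neg, mul_one, S_eval_neg_two] at ha
    rw [Int.negOnePow_sub] at ha
    simp only [Int.negOnePow_one] at ha
    have : (j.negOnePow : ℤ) = 1 := by
      have h3 : ((j.negOnePow : ℤ) : ℝ) = 1 := by
        push_cast at ha ⊢
        linarith
      exact_mod_cast h3
    have he := (Int.negOnePow_eq_one_iff j).1 (Units.ext this)
    simpa using he.two_dvd

end geosec

section dihsec
variable {G : Type} [Group G]

theorem tri_dih_form {a b : G} (ha : a * a = 1) (hb : b * b = 1) {u : G}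
    (hu : u ∈ Subgroup.closure ({a, b} : Set G)) :
    ∃ i : ℤ, u = (a * b) ^ i ∨ u = (a * b) ^ i * a := by
  have hai : a⁻¹ = a := inv_eq_of_mul_eq_one_left ha
  have hbi : b⁻¹ = b := inv_eq_of_mul_eq_one_left hb
  have hax : ∀ i : ℤ, a * (a * b) ^ i = (a * b) ^ (-i) * a := by
    intro i
    have : a * (a * b) ^ i * a⁻¹ = (a * b) ^ (-i) := by
      rw [← conj_zpow, zpow_neg, ← inv_zpow]
      congr 1
      rw [mul_inv_rev, hai, hbi, ← mul_assoc, ha, one_mul]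
    rw [← this]; group
  induction hu using Subgroup.closure_induction with
  | mem x hx =>
    rcases hx with rfl | hx
    · exact ⟨0, Or.inr (by simp)⟩
    · rw [Set.mem_singleton_iff] at hx
      subst hx
      refine ⟨-1, Or.inr ?_⟩
      rw [zpow_neg_one, mul_inv_rev, hai, hbi, mul_assoc, ha, mul_one]
  | one => exact ⟨0, Or.inl (by simp)⟩
  | mul x y _ _ hx hy =>
    obtain ⟨i, rfl | rfl⟩ := hx <;> obtain ⟨j, rfl | rfl⟩ := hy
    · exact ⟨i + j, Or.inl (zpow_add _ _ _).symm⟩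
    · exact ⟨i + j, Or.inr (by rw [zpow_add, mul_assoc])⟩
    · exact ⟨i + -j, Or.inr (by rw [zpow_add, mul_assoc, hax, mul_assoc])⟩
    · refine ⟨i + -j, Or.inl ?_⟩
      rw [zpow_add, mul_assoc, ← mul_assoc a, hax, mul_assoc ((a * b) ^ (-j)), ha, mul_one]
  | inv x _ hx =>
    obtain ⟨i, rfl | rfl⟩ := hx
    · exact ⟨-i, Or.inl (zpow_neg _ _).symm⟩
    · refine ⟨i, Or.inr ?_⟩
      rw [mul_inv_rev, hai, ← zpow_neg, hax, neg_neg]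

theorem tri_conj_zpow {a b : G} (ha : a * a = 1) (hb : b * b = 1) (i : ℤ) :
    a * (a * b) ^ i = (a * b) ^ (-i) * a := by
  have hai : a⁻¹ = a := inv_eq_of_mul_eq_one_left ha
  have hbi : b⁻¹ = b := inv_eq_of_mul_eq_one_left hb
  have : a * (a * b) ^ i * a⁻¹ = (a * b) ^ (-i) := by
    rw [← conj_zpow, zpow_neg, ← inv_zpow]
    congr 1
    rw [mul_inv_rev, hai, hbi, ← mul_assoc, ha, one_mul]
  rw [← this]; group

/-- commuting elements of a dihedral group -/
theorem tri_dih_comm {a b : G} (ha : a * a = 1) (hb : b * b = 1) {u : G}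
    (hu : u ∈ Subgroup.closure ({a, b} : Set G)) (h : u * a = a * u) :
    ∃ i : ℤ, (u = (a * b) ^ i ∨ u = (a * b) ^ i * a) ∧ (a * b) ^ (2 * i) = 1 := by
  obtain ⟨i, hi⟩ := tri_dih_form ha hb hu
  refine ⟨i, hi, ?_⟩
  have key : (a * b) ^ i * a = a * (a * b) ^ i := by
    rcases hi with rfl | rfl
    · exact h
    · rw [← mul_assoc] at h
      exact mul_right_cancel h
  rw [tri_conj_zpow ha hb] at key
  have := mul_right_cancel key
  rw [two_mul, zpow_add]
  nth_rw 1 [this]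
  rw [← zpow_add]; simp

theorem tri_dih_swap {a b : G} (ha : a * a = 1) (hb : b * b = 1) {u : G}
    (hu : u ∈ Subgroup.closure ({a, b} : Set G)) (h : u * a = b * u) :
    ∃ i : ℤ, (a * b) ^ (2 * i + 1) = 1 := by
  obtain ⟨i, hi⟩ := tri_dih_form ha hb hu
  refine ⟨i, ?_⟩
  have key : (a * b) ^ i * a = b * (a * b) ^ i := by
    rcases hi with rfl | rfl
    · exact h
    · rw [← mul_assoc] at h
      exact mul_right_cancel h
  have h2 : b * (a * b) ^ i = a * (a * b) ^ (i + 1) := by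
    rw [add_comm, zpow_add, zpow_one, ← mul_assoc, ← mul_assoc, ha, one_mul]
  rw [h2, tri_conj_zpow ha hb] at key
  have := mul_right_cancel key
  rw [show 2 * i + 1 = (i + 1) + i by ring, zpow_add, this, ← zpow_add]
  simp

theorem tri_dih_odd {a b : G} (ha : a * a = 1) (hb : b * b = 1) {q : ℕ}
    (hq : (a * b) ^ (2 * q + 1) = 1) {u : G}
    (hu : u ∈ Subgroup.closure ({a, b} : Set G)) (h : u * a = a * u) : u = 1 ∨ u = a := by
  obtain ⟨i, hi, h2⟩ := tri_dih_comm ha hb hu h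
  have h3 : (a * b) ^ i = 1 := by
    have : i = i * (2 * q + 1 : ℕ) + (2 * i) * (-q) := by push_cast; ring
    rw [this, zpow_add, zpow_mul (a * b) (2 * i), h2, mul_comm, zpow_mul, zpow_natCast, hq]
    simp
  simpa [h3] using hi

theorem tri_pow_flip {a b : G} (ha : a * a = 1) (hb : b * b = 1) (q : ℕ) :
    ((a * b) ^ q)⁻¹ = (b * a) ^ q := by
  rw [← inv_pow, mul_inv_rev, inv_eq_of_mul_eq_one_left ha, inv_eq_of_mul_eq_one_left hb]

/-- `(ab)^q` conjugates `a` to `b` if `(ab)^(2q+1) = 1`. -/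
theorem tri_pow_conj {a b : G} (ha : a * a = 1) (hb : b * b = 1) {q : ℕ}
    (hq : (a * b) ^ (2 * q + 1) = 1) : (a * b) ^ q * a = b * (a * b) ^ q := by
  have h2 : b * (a * b) ^ q = a * (a * b) ^ ((q + 1 : ℕ) : ℤ) := by
    rw [zpow_natCast, pow_succ', ← mul_assoc, ← mul_assoc, ha, one_mul]
  rw [h2, tri_conj_zpow ha hb]
  congr 1
  rw [zpow_neg, zpow_natCast, eq_inv_iff_mul_eq_one, ← pow_add, ← hq]
  congr 1; ring

end dihsec

section trisec

theorem cgen_sq (k' l' m' : ℕ) (i : Fin 3) : cgen k' l' m' i * cgen k' l' m' i = 1 := by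
  have : FreeGroup.of i ^ 2 ∈ triRels k' l' m' := by
    fin_cases i <;> simp [triRels]
  have h := PresentedGroup.one_of_mem this
  rw [map_pow, sq] at h
  exact h

theorem cgen_01 (k' l' m' : ℕ) : (cgen k' l' m' 0 * cgen k' l' m' 1) ^ k' = 1 := by
  have : (FreeGroup.of 0 * FreeGroup.of 1) ^ k' ∈ triRels k' l' m' := by simp [triRels]
  have h := PresentedGroup.one_of_mem this
  rw [map_pow, map_mul] at h
  exact h

theorem cgen_12 (k' l' m' : ℕ) : (cgen k' l' m' 1 * cgen k' l' m' 2) ^ l' = 1 := by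
  have : (FreeGroup.of 1 * FreeGroup.of 2) ^ l' ∈ triRels k' l' m' := by simp [triRels]
  have h := PresentedGroup.one_of_mem this
  rw [map_pow, map_mul] at h
  exact h

theorem cgen_20 (k' l' m' : ℕ) : (cgen k' l' m' 2 * cgen k' l' m' 0) ^ m' = 1 := by
  have : (FreeGroup.of 2 * FreeGroup.of 0) ^ m' ∈ triRels k' l' m' := by simp [triRels]
  have h := PresentedGroup.one_of_mem this
  rw [map_pow, map_mul] at h
  exact h

theorem cgen_gen (k' l' m' : ℕ) (w : Tri k' l' m') :
    w ∈ Subgroup.closure (Set.range (cgen k' l' m')) := by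
  have h := PresentedGroup.closure_range_of (triRels k' l' m')
  have h2 : (w : PresentedGroup (triRels k' l' m')) ∈
    Subgroup.closure (Set.range (PresentedGroup.of (rels := triRels k' l' m'))) := by
    rw [h]; trivial
  exact h2

/-- Universal property. -/
theorem tri_lift (k' l' m' : ℕ) {H : Type} [Group H] (s : Fin 3 → H) (hs : ∀ i, s i ^ 2 = 1)
    (h01 : (s 0 * s 1) ^ k' = 1) (h12 : (s 1 * s 2) ^ l' = 1) (h20 : (s 2 * s 0) ^ m' = 1) :
    ∃ φ : Tri k' l' m' →* H, ∀ i, φ (cgen k' l' m' i) = s i := by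
  have h : ∀ r ∈ triRels k' l' m', FreeGroup.lift s r = 1 := by
    intro r hr
    simp only [triRels, Set.mem_insert_iff, Set.mem_singleton_iff] at hr
    rcases hr with rfl | rfl | rfl | rfl | rfl | rfl <;> simp [hs, h01, h12, h20]
  exact ⟨PresentedGroup.toGroup h, fun i => PresentedGroup.toGroup.of h⟩

theorem tri_n (k' l' m' : ℕ) :
    ∃ n : Tri k' l' m' → Tri k' l' m' → ZMod 2, (∀ t, n 1 t = 0) ∧
      (∀ w v t, n (w * v) t = n v t + n w (v * t * v⁻¹)) ∧
      (∀ i t, t ≠ cgen k' l' m' i → n (cgen k' l' m' i) t = 0) ∧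
      (∀ i, n (cgen k' l' m' i) (cgen k' l' m' i) = 1) := by
  obtain ⟨φ, hφ⟩ := tri_lift k' l' m'
    (fun i => triSig (cgen k' l' m' i) (cgen_sq k' l' m' i)) (fun i => triSig_sq _ _)
    (triSig_rel _ _ _ _ _ (cgen_01 _ _ _)) (triSig_rel _ _ _ _ _ (cgen_12 _ _ _))
    (triSig_rel _ _ _ _ _ (cgen_20 _ _ _))
  exact tri_cocycle (cgen k' l' m') (cgen_sq k' l' m') (cgen_gen k' l' m') φ hφ

open Real in
theorem tri_exact (k l m : ℕ) (hk : 1 ≤ k) (hl : 1 ≤ l) (hm : 1 ≤ m) (j : ℤ)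
    (hj : (cgen (2 * k) (2 * l + 1) (2 * m + 1) 0 * cgen (2 * k) (2 * l + 1) (2 * m + 1) 1) ^ j = 1) :
    (2 * k : ℤ) ∣ j := by
  let α : ℝ := -2 * cos (π / (2 * k : ℕ))
  let β : ℝ := -2 * cos (π / (2 * l + 1 : ℕ))
  let γ : ℝ := -2 * cos (π / (2 * m + 1 : ℕ))
  let A : Matrix (Fin 3) (Fin 3) ℝ := !![2, α, γ; α, 2, β; γ, β, 2]
  let f : Fin 3 → Module.Dual ℝ (Fin 3 → ℝ) := fun i => ∑ a, A i a • LinearMap.proj a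
  let e : Fin 3 → Fin 3 → ℝ := fun i => Pi.single i 1
  have hfe : ∀ i a, f i (e a) = A i a := by
    intro i a
    simp [f, e, LinearMap.sum_apply, Pi.single_apply]
  have hf : ∀ i, f i (e i) = 2 := by
    intro i
    rw [hfe]
    fin_cases i <;> simp [A]
  let s : Fin 3 → ((Fin 3 → ℝ) ≃ₗ[ℝ] (Fin 3 → ℝ)) := fun i => Module.reflection (hf i)
  have h01 : (s 0 * s 1) ^ (2 * k) = 1 := by
    rcases Nat.lt_or_ge 1 k with h | h
    · apply tri_refl_pow (hf 0) (hf 1) (by omega)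
      rw [hfe, hfe]; simp [A, α]; ring
    · obtain rfl : k = 1 := by omega
      apply tri_refl_pow_two (hf 0) (hf 1)
      · rw [hfe]; simp [A, α]
      · rw [hfe]; simp [A, α]
  have h12 : (s 1 * s 2) ^ (2 * l + 1) = 1 := by
    apply tri_refl_pow (hf 1) (hf 2) (by omega)
    rw [hfe, hfe]; simp [A, β]; ring
  have h20 : (s 2 * s 0) ^ (2 * m + 1) = 1 := by
    apply tri_refl_pow (hf 2) (hf 0) (by omega)
    rw [hfe, hfe]; simp [A, γ]; ring
  have hss : ∀ i, s i ^ 2 = 1 := by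
    intro i
    ext1 z
    rw [sq]
    exact Module.involutive_reflection (hf i) z
  obtain ⟨φ, hφ⟩ := tri_lift (2 * k) (2 * l + 1) (2 * m + 1) s hss h01 h12 h20
  have h := congrArg φ hj
  rw [map_zpow, map_mul, hφ, hφ, map_one] at h
  refine tri_refl_exact (hf 0) (hf 1) hk ?_ ?_ ?_ j h
  · rw [hfe]; simp [A, α]
  · rw [hfe]; simp [A, α]
  · rw [LinearIndependent.pair_iff]
    intro a b hab
    have h0 := congrFun hab 0
    have h1 := congrFun hab 1
    simp [e] at h0 h1
    exact ⟨h0, h1⟩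

end trisec

/-- in `Δ(2k, 2l+1, 2m+1)` (first link period even, other two odd), the
canonical reflections are pairwise conjugate and the centralizer of `c₀` is generated by
`c₀`, `(c₀c₁)^k`, and `(c₂c₀)^m (c₁c₂)^l (c₁c₀)^k (c₂c₁)^l (c₀c₂)^m`. -/
theorem centralizer_even_odd_odd (k l m : ℕ) (hk : 1 ≤ k) (hl : 1 ≤ l) (hm : 1 ≤ m)
    (harea : (1 : ℚ) / (2 * k) + 1 / (2 * l + 1) + 1 / (2 * m + 1) < 1) :
    ∀ c₀ c₁ c₂ : Tri (2 * k) (2 * l + 1) (2 * m + 1),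
      c₀ = cgen _ _ _ 0 → c₁ = cgen _ _ _ 1 → c₂ = cgen _ _ _ 2 →
      IsConj c₀ c₁ ∧ IsConj c₁ c₂ ∧ IsConj c₀ c₂ ∧
      Subgroup.centralizer {c₀} =
        Subgroup.closure {c₀, (c₀ * c₁) ^ k,
          (c₂ * c₀) ^ m * (c₁ * c₂) ^ l * (c₁ * c₀) ^ k * (c₂ * c₁) ^ l * (c₀ * c₂) ^ m} := by
  rintro c₀ c₁ c₂ h₀ h₁ h₂
  have hsq := cgen_sq (2 * k) (2 * l + 1) (2 * m + 1)
  have hexact := tri_exact k l m hk hl hm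
  have r12 := cgen_12 (2 * k) (2 * l + 1) (2 * m + 1)
  have r20 := cgen_20 (2 * k) (2 * l + 1) (2 * m + 1)
  have r01 := cgen_01 (2 * k) (2 * l + 1) (2 * m + 1)
  have hgen := cgen_gen (2 * k) (2 * l + 1) (2 * m + 1)
  obtain ⟨n, n1, n2, n3, n4⟩ := tri_n (2 * k) (2 * l + 1) (2 * m + 1)
  generalize hc : cgen (2 * k) (2 * l + 1) (2 * m + 1) = c at *
  have q0 : c₀ * c₀ = 1 := h₀ ▸ hsq 0
  have q1 : c₁ * c₁ = 1 := h₁ ▸ hsq 1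
  have q2 : c₂ * c₂ = 1 := h₂ ▸ hsq 2
  rw [← h₀, ← h₁] at hexact r01
  rw [← h₁, ← h₂] at r12
  rw [← h₂, ← h₀] at r20
  have e20 : (c₂ * c₀) ^ m * c₂ = c₀ * (c₂ * c₀) ^ m := tri_pow_conj q2 q0 r20
  have e12 : (c₁ * c₂) ^ l * c₁ = c₂ * (c₁ * c₂) ^ l := tri_pow_conj q1 q2 r12
  have f20 : ((c₂ * c₀) ^ m)⁻¹ = (c₀ * c₂) ^ m := tri_pow_flip q2 q0 m
  have f12 : ((c₁ * c₂) ^ l)⁻¹ = (c₂ * c₁) ^ l := tri_pow_flip q1 q2 l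
  have f01 : ((c₀ * c₁) ^ k)⁻¹ = (c₁ * c₀) ^ k := tri_pow_flip q0 q1 k
  have k01 : (c₁ * c₀) ^ k = (c₀ * c₁) ^ k := by
    rw [← f01, inv_eq_iff_mul_eq_one, ← pow_add, ← two_mul, r01]
  have comm0 : (c₀ * c₁) ^ k * c₀ = c₀ * (c₀ * c₁) ^ k := by
    have := tri_conj_zpow q0 q1 k
    rw [zpow_neg, zpow_natCast, f01, k01] at this
    exact this.symm
  have comm1 : (c₁ * c₀) ^ k * c₁ = c₁ * (c₁ * c₀) ^ k := by
    have := tri_conj_zpow q1 q0 k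
    rw [zpow_neg, zpow_natCast, tri_pow_flip q1 q0, ← k01] at this
    exact this.symm
  let g : Fin 3 → Tri (2 * k) (2 * l + 1) (2 * m + 1) :=
    ![1, (c₂ * c₀) ^ m * (c₁ * c₂) ^ l, (c₂ * c₀) ^ m]
  have hg : ∀ s, g s * c s * (g s)⁻¹ = c₀ := by
    intro s
    rw [mul_inv_eq_iff_eq_mul]
    fin_cases s
    · simp [g, h₀]
    · change (c₂ * c₀) ^ m * (c₁ * c₂) ^ l * c 1 = c₀ * ((c₂ * c₀) ^ m * (c₁ * c₂) ^ l)
      rw [← h₁, mul_assoc, e12, ← mul_assoc, e20, mul_assoc]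
    · change (c₂ * c₀) ^ m * c 2 = c₀ * (c₂ * c₀) ^ m
      rw [← h₂, e20]
  have C02 : IsConj c₀ c₂ := by
    apply IsConj.symm
    exact isConj_iff.2 ⟨g 2, by rw [h₂]; exact hg 2⟩
  have C01 : IsConj c₀ c₁ := by
    apply IsConj.symm
    exact isConj_iff.2 ⟨g 1, by rw [h₁]; exact hg 1⟩
  refine ⟨C01, C01.symm.trans C02, C02, ?_⟩
  have hthird : (c₂ * c₀) ^ m * (c₁ * c₂) ^ l * (c₁ * c₀) ^ k * (c₂ * c₁) ^ l * (c₀ * c₂) ^ m =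
      g 1 * (c₁ * c₀) ^ k * (g 1)⁻¹ := by
    change _ = (c₂ * c₀) ^ m * (c₁ * c₂) ^ l * (c₁ * c₀) ^ k * ((c₂ * c₀) ^ m * (c₁ * c₂) ^ l)⁻¹
    rw [mul_inv_rev, f20, f12]
    simp only [mul_assoc]
  rw [hthird]
  set H := Subgroup.closure {c₀, (c₀ * c₁) ^ k, g 1 * (c₁ * c₀) ^ k * (g 1)⁻¹} with hH
  have m0 : c₀ ∈ H := Subgroup.subset_closure (by simp)
  have mk : (c₀ * c₁) ^ k ∈ H := Subgroup.subset_closure (by simp)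
  have m3 : g 1 * (c₁ * c₀) ^ k * (g 1)⁻¹ ∈ H := Subgroup.subset_closure (by simp)
  apply le_antisymm
  · let P : Fin 3 → Fin 3 → Tri (2 * k) (2 * l + 1) (2 * m + 1) → Prop :=
      fun s t w => g t * w * (g s)⁻¹ ∈ H
    have P_one : ∀ s, P s s 1 := by
      intro s; change g s * 1 * (g s)⁻¹ ∈ H; simp [one_mem]
    have P_self : ∀ s, P s s (c s) := by
      intro s; change g s * c s * (g s)⁻¹ ∈ H; rw [hg]; exact m0
    have P_mul : ∀ r s t u v, P s t u → P r s v → P r t (u * v) := by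
      intro r s t u v h1 h2
      have := mul_mem h1 h2
      change g t * (u * v) * (g r)⁻¹ ∈ H
      convert this using 1
      group
    -- odd pairs
    have P_odd : ∀ r s j u (q : ℕ), (c s * c r) ^ (2 * q + 1) = 1 →
        (g r)⁻¹ * g s ∈ Subgroup.closure ({c s, c r} : Set _) →
        u ∈ Subgroup.closure ({c s, c r} : Set _) → (j = r ∨ j = s) →
        u * c s = c j * u → P s j u := by
      intro r s j u q hq hgm hu hj h
      have hz : ∀ z ∈ Subgroup.closure ({c s, c r} : Set _), z * c s = c s * z → P s s z := by
        intro z hz hzc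
        rcases tri_dih_odd (hsq s) (hsq r) hq hz hzc with rfl | rfl
        · exact P_one s
        · exact P_self s
      rcases hj with rfl | rfl
      · have hcj : ((g j)⁻¹ * g s) * c s = c j * ((g j)⁻¹ * g s) := by
          have e1 : g s * c s = c₀ * g s := mul_inv_eq_iff_eq_mul.1 (hg s)
          have e2 : g j * c j = c₀ * g j := mul_inv_eq_iff_eq_mul.1 (hg j)
          have e3 : (g j)⁻¹ * c₀ = c j * (g j)⁻¹ := by
            rw [inv_mul_eq_iff_eq_mul, ← mul_assoc, e2, mul_inv_cancel_right]
          rw [mul_assoc, e1, ← mul_assoc, e3, mul_assoc]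
        have h5 := hz (((g j)⁻¹ * g s)⁻¹ * u) (mul_mem (inv_mem hgm) hu) (by
          rw [mul_assoc, h, ← mul_assoc, ← mul_assoc]
          congr 1
          rw [inv_mul_eq_iff_eq_mul, ← mul_assoc, hcj, mul_inv_cancel_right])
        change g s * (((g j)⁻¹ * g s)⁻¹ * u) * (g s)⁻¹ ∈ H at h5
        change g j * u * (g s)⁻¹ ∈ H
        convert h5 using 1
        group
      · exact hz u hu h
    -- even pairs
    have P_even : ∀ r s j u, (∀ i : ℤ, (c s * c r) ^ i = 1 → (2 * k : ℤ) ∣ i) →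
        P s s ((c s * c r) ^ k) →
        u ∈ Subgroup.closure ({c s, c r} : Set _) → (j = r ∨ j = s) →
        u * c s = c j * u → P s j u := by
      intro r s j u hex hPk hu hj h
      rcases hj with rfl | rfl
      · exfalso
        obtain ⟨i, hi⟩ := tri_dih_swap (hsq s) (hsq j) hu h
        obtain ⟨d, hd⟩ := hex _ hi
        rw [mul_assoc] at hd
        omega
      · obtain ⟨i, hi, h2⟩ := tri_dih_comm (hsq j) (hsq r) hu h
        obtain ⟨d, hd⟩ := hex _ h2
        have hid : i = k * d := by
          rw [mul_assoc] at hd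
          omega
        have hPi : P j j ((c j * c r) ^ i) := by
          change g j * (c j * c r) ^ i * (g j)⁻¹ ∈ H
          rw [hid, zpow_mul, zpow_natCast, ← conj_zpow]
          exact zpow_mem hPk d
        rcases hi with rfl | rfl
        · exact hPi
        · exact P_mul _ _ _ _ _ hPi (P_self j)
    have P_dih : ∀ r s j u, r ≠ s → u ∈ Subgroup.closure (c '' {r, s}) → (j = r ∨ j = s) →
      u * c s = c j * u → P s j u := by
      intro r s j u hrs hu hj h
      have hset : c '' {r, s} = {c s, c r} := by rw [Set.image_pair, Set.pair_comm]
      rw [hset] at hu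
      have flip : ∀ a b : Tri (2 * k) (2 * l + 1) (2 * m + 1), a * a = 1 → b * b = 1 →
          ∀ q : ℕ, (a * b) ^ q = 1 → (b * a) ^ q = 1 := by
        intro a b ha hb q h
        rw [← tri_pow_flip ha hb, h, inv_one]
      have mem_l : ∀ a b : Tri (2 * k) (2 * l + 1) (2 * m + 1), ∀ q : ℕ,
          (a * b) ^ q ∈ Subgroup.closure ({a, b} : Set _) := fun a b q =>
        pow_mem (mul_mem (Subgroup.subset_closure (by simp)) (Subgroup.subset_closure (by simp))) q
      have hg20 : (g 0)⁻¹ * g 2 ∈ Subgroup.closure ({c 2, c 0} : Set _) := by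
        change (1 : Tri (2 * k) (2 * l + 1) (2 * m + 1))⁻¹ * (c₂ * c₀) ^ m ∈ _
        rw [inv_one, one_mul, h₂, h₀]
        exact mem_l _ _ _
      have hg12 : (g 2)⁻¹ * g 1 ∈ Subgroup.closure ({c 1, c 2} : Set _) := by
        change ((c₂ * c₀) ^ m)⁻¹ * ((c₂ * c₀) ^ m * (c₁ * c₂) ^ l) ∈ _
        rw [inv_mul_cancel_left, h₁, h₂]
        exact mem_l _ _ _
      have hg02 : (g 2)⁻¹ * g 0 ∈ Subgroup.closure ({c 0, c 2} : Set _) := by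
        rw [Set.pair_comm]
        have := inv_mem hg20
        rwa [mul_inv_rev, inv_inv] at this
      have hg21 : (g 1)⁻¹ * g 2 ∈ Subgroup.closure ({c 2, c 1} : Set _) := by
        rw [Set.pair_comm]
        have := inv_mem hg12
        rwa [mul_inv_rev, inv_inv] at this
      have hex10 : ∀ i : ℤ, (c 1 * c 0) ^ i = 1 → (2 * k : ℤ) ∣ i := by
        intro i hi
        apply hexact
        have : c 1 * c 0 = (c₀ * c₁)⁻¹ := by
          rw [mul_inv_rev, inv_eq_of_mul_eq_one_left q0, inv_eq_of_mul_eq_one_left q1, h₀, h₁]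
        rwa [this, inv_zpow, inv_eq_one] at hi
      have hPk0 : P 0 0 ((c 0 * c 1) ^ k) := by
        change 1 * (c 0 * c 1) ^ k * (1)⁻¹ ∈ H
        rw [one_mul, inv_one, mul_one, ← h₀, ← h₁]
        exact mk
      have hPk1 : P 1 1 ((c 1 * c 0) ^ k) := by
        change g 1 * (c 1 * c 0) ^ k * (g 1)⁻¹ ∈ H
        rw [← h₀, ← h₁]
        exact m3
      rw [h₁, h₂] at r12
      rw [h₂, h₀] at r20
      rw [h₀, h₁] at hexact
      have hr : r = 0 ∨ r = 1 ∨ r = 2 := by fin_cases r <;> simp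
      have hs : s = 0 ∨ s = 1 ∨ s = 2 := by fin_cases s <;> simp
      rcases hr with rfl | rfl | rfl <;> rcases hs with rfl | rfl | rfl
      · exact absurd rfl hrs
      · exact P_even _ _ _ _ hex10 hPk1 hu hj h
      · exact P_odd _ _ _ _ m r20 hg20 hu hj h
      · exact P_even _ _ _ _ hexact hPk0 hu hj h
      · exact absurd rfl hrs
      · exact P_odd _ _ _ _ l (flip _ _ (hsq 1) (hsq 2) _ r12) hg21 hu hj h
      · exact P_odd _ _ _ _ m (flip _ _ (hsq 2) (hsq 0) _ r20) hg02 hu hj h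
      · exact P_odd _ _ _ _ l r12 hg12 hu hj h
      · exact absurd rfl hrs
    intro w hw
    rw [Subgroup.mem_centralizer_singleton_iff] at hw
    have := tri_key c hsq (by rw [Set.image_univ]; exact hgen) n n1 n2 n3 n4 P P_one P_self P_mul
      P_dih w 0 0 (by rw [← h₀]; first | exact hw | exact hw.symm)
    change 1 * w * (1)⁻¹ ∈ H at this
    simpa using this
  · rw [hH, Subgroup.closure_le]
    rintro x (rfl | rfl | rfl)
    · exact Subgroup.mem_centralizer_singleton_iff.2 rfl
    · have := comm0
      exact Subgroup.mem_centralizer_singleton_iff.2 (by first | exact this | exact this.symm)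
    · have h5 : (g 1 * (c₁ * c₀) ^ k * (g 1)⁻¹) * c₀ = c₀ * (g 1 * (c₁ * c₀) ^ k * (g 1)⁻¹) := by
        have hg1 := hg 1
        rw [← h₁] at hg1
        generalize (c₁ * c₀) ^ k = y at comm1
        rw [← hg1]
        have e : ∀ x y z : Tri (2 * k) (2 * l + 1) (2 * m + 1),
          (x * y * x⁻¹) * (x * z * x⁻¹) = x * (y * z) * x⁻¹ := by intros; group
        rw [e, e, comm1]
      exact Subgroup.mem_centralizer_singleton_iff.2 (by first | exact h5 | exact h5.symm)
end
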